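/- arXiv:1202.4591 — 3 statements merged into one kernel-verified Lean document; each statement's English description precedes it below -/
import Mathlib

section
/- Let (Ω,Σ,P) be a probability space whose measure P has the Darboux property, let I be an additive partition entropy that is continuous on 𝔄₂, and let Δ(V,W,λ) be the unique function associated with I (satisfying Δ(V,W,λ) = I(T_{V,W}𝒜) − I(𝒜) for disjoint V, W of equal measure and 𝒜 ∈ F_λ(V,W), together with the cocycle, piecewise-additivity and multiplicativity-in-λ properties). Then there exists a function Δ(V,W) ∈ ℝ, defined for all measurable V, W with P(V)=P(W), such that Δ(V,W,λ) = Δ(V,W)·log₂ λ for all λ>0, and Δ(·,·) satisfies: (1) Δ(U,W) = Δ(U,V) + Δ(V,W) for any U, V, W of equal measure; (2) Δ(V,W) = Δ(V₁,W₁) + Δ(V₂,W₂) whenever V = V₁⊔V₂, W = W₁⊔W₂ with P(Vᵢ)=P(Wᵢ), i=1,2; (3) Δ is uniformly continuous with respect to the pseudometric ((V,W),(V',W')) ↦ P(V△V') + P(W△W') on pairs of sets of equal measure. -/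
/-!
The function `x ↦ Δ(V,W,2ˣ)` is additive in `x`, so it is linear as soon as it is continuous at `0`
(`delta₃_eq_mul_logb`). To get continuity for disjoint `V`, `W` of measure at most `1/4`
(`continuousAt_of_le_quarter`), realise `Δ(V,W,λ)` for `λ` near `1` as a difference `I({C',C'ᶜ}) - I({C,Cᶜ})` of entropies of
two-atom partitions (`delta₃_eq`), where by the Darboux property `C` can be chosen of measure
`1/(1+λ)` and close to a fixed set of measure `1/2` (`exists_near`), and `C' = (C ∖ V) ∪ W`;
continuity of `I` on two-atom partitions then applies. Arbitrary pairs are reduced to this case by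
piecewise additivity: the common part `V ∩ W` contributes nothing (`delta₃_sdiff`), and disjoint
pairs can be cut in halves. Hence `Δ(V,W) = Δ(V,W,2)` works, and the cocycle and additivity
properties are inherited from `Δ(·,·,2)`.

For uniform continuity, the main point is that `Δ(V,W)` is small whenever `P V = P W` is small
(`delta₃_small`): perturb a fixed set of measure `1/4` by `V` and `W` to obtain a two-atom partition
with ratio `λ ≥ 2`, which `T_{V,W}` moves only slightly; then
`|Δ(V,W)| ≤ |Δ(V,W) · log₂ λ| = |Δ(V,W,λ)|` is small. For general pairs, choose subsets of `V ∩ V'`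
and `W ∩ W'` of one common, nearly full measure; their contribution cancels in
`Δ(V',W') - Δ(V,W)`, and what remains is covered by the small case.
-/

open MeasureTheory Filter Topology

namespace APE

variable {Ω : Type*} [MeasurableSpace Ω]

/-- A finite measurable partition of `Ω`: a finite collection of nonempty pairwise
disjoint measurable sets whose union is `Ω`. -/
def IsFinPart (𝒜 : Finset (Set Ω)) : Prop :=
  (∀ A ∈ 𝒜, MeasurableSet A) ∧ (∀ A ∈ 𝒜, A ≠ ∅) ∧
    (𝒜 : Set (Set Ω)).PairwiseDisjoint id ∧ ⋃₀ (𝒜 : Set (Set Ω)) = Set.univ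

/-- The join (common refinement) `𝒜 ∨ ℬ` of two finite partitions. -/
noncomputable def join (𝒜 ℬ : Finset (Set Ω)) : Finset (Set Ω) := by
  classical
  exact ((𝒜 ×ˢ ℬ).image fun p => p.1 ∩ p.2).filter fun s => s ≠ ∅

/-- Stochastic independence `𝒜 ⊥ ℬ` of two finite partitions. -/
def Indep (P : Measure Ω) (𝒜 ℬ : Finset (Set Ω)) : Prop :=
  ∀ A ∈ 𝒜, ∀ B ∈ ℬ, P (A ∩ B) = P A * P B

/-- An additive partition entropy: `I (𝒜·ℬ) = I 𝒜 + I ℬ` for independent partitions. -/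
def IsAPE (P : Measure Ω) (I : Finset (Set Ω) → ℝ) : Prop :=
  ∀ 𝒜 ℬ : Finset (Set Ω), IsFinPart 𝒜 → IsFinPart ℬ → Indep P 𝒜 ℬ →
    I (join 𝒜 ℬ) = I 𝒜 + I ℬ

/-- Restriction `𝒜|S` of a partition to a set `S`. -/
noncomputable def restr (𝒜 : Finset (Set Ω)) (S : Set Ω) : Finset (Set Ω) := by
  classical
  exact (𝒜.image fun A => A ∩ S).filter fun s => s ≠ ∅

/-- The number `N(𝒜)` of atoms of positive measure. -/
noncomputable def numPos (P : Measure Ω) (𝒜 : Finset (Set Ω)) : ℕ := by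
  classical
  exact (𝒜.filter fun A => 0 < P A).card

/-- The pseudometric `D` on finite partitions. -/
noncomputable def Ddist (P : Measure Ω) (𝒜 ℬ : Finset (Set Ω)) : ℝ :=
  sInf ((fun Z => (P Z).toReal) ''
      {Z : Set Ω | MeasurableSet Z ∧ restr 𝒜 Zᶜ = restr ℬ Zᶜ}) +
    |(numPos P 𝒜 : ℝ) - (numPos P ℬ : ℝ)|

/-- Continuity of `I` with respect to the pseudometric `D`. -/
def CtsD (P : Measure Ω) (I : Finset (Set Ω) → ℝ) : Prop :=
  ∀ 𝒜 : Finset (Set Ω), IsFinPart 𝒜 → ∀ ε : ℝ, 0 < ε → ∃ δ : ℝ, 0 < δ ∧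
    ∀ ℬ : Finset (Set Ω), IsFinPart ℬ → Ddist P 𝒜 ℬ < δ → |I ℬ - I 𝒜| < ε

/-- The two-atom partition `{A, Ω ∖ A}`. -/
noncomputable def twoPart (A : Set Ω) : Finset (Set Ω) := by
  classical
  exact {A, Aᶜ}

/-- Continuity of `I` on the family `𝔄₂` of two-atom partitions. -/
def CtsOnA2 (P : Measure Ω) (I : Finset (Set Ω) → ℝ) : Prop :=
  ∀ (A : Set Ω) (As : ℕ → Set Ω), MeasurableSet A → (∀ n, MeasurableSet (As n)) →
    0 < P A → P A < 1 →
    Tendsto (fun n => (P (symmDiff A (As n))).toReal) atTop (𝓝 0) →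
    Tendsto (fun n => I (twoPart (As n))) atTop (𝓝 (I (twoPart A)))

/-- The Darboux property of a measure. -/
def Darboux (P : Measure Ω) : Prop :=
  ∀ A : Set Ω, MeasurableSet A → ∀ θ : ENNReal, 0 < θ → θ < P A →
    ∃ B : Set Ω, MeasurableSet B ∧ B ⊆ A ∧ P B = θ

/-- Nonatomicity of a measure. -/
def NonAtomic (P : Measure Ω) : Prop :=
  ∀ A : Set Ω, MeasurableSet A → 0 < P A →
    ∃ B : Set Ω, MeasurableSet B ∧ B ⊆ A ∧ 0 < P B ∧ P B < P A

/-- A finitely additive real set function on measurable sets. -/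
def FinAdd (m : Set Ω → ℝ) : Prop :=
  ∀ A B : Set Ω, MeasurableSet A → MeasurableSet B → Disjoint A B →
    m (A ∪ B) = m A + m B

/-- A countably additive real set function on measurable sets. -/
def CountAdd (m : Set Ω → ℝ) : Prop :=
  ∀ f : ℕ → Set Ω, (∀ n, MeasurableSet (f n)) →
    (∀ i j, i ≠ j → Disjoint (f i) (f j)) →
    HasSum (fun n => m (f n)) (m (⋃ n, f n))

/-- Absolute continuity of `m` with respect to `P`. -/
def AbsCont (P : Measure Ω) (m : Set Ω → ℝ) : Prop :=
  ∀ ε : ℝ, 0 < ε → ∃ δ : ℝ, 0 < δ ∧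
    ∀ A : Set Ω, MeasurableSet A → (P A).toReal < δ → |m A| < ε

/-- The entropy `L_m(𝒜) = Σ_{A∈𝒜} m(A)·log₂(1/P(A))`.  (If `P A = 0` then the
corresponding term vanishes: `m A = 0` for `m` vanishing on null sets, which
implements the convention `0·(+∞) = 0`.) -/
noncomputable def Lm (P : Measure Ω) (m : Set Ω → ℝ) (𝒜 : Finset (Set Ω)) : ℝ :=
  ∑ A ∈ 𝒜, m A * Real.logb 2 (1 / (P A).toReal)

/-- Two partitions have the same measures of atoms. -/
def SameMeasures (P : Measure Ω) (𝒜 ℬ : Finset (Set Ω)) : Prop :=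
  ∃ e : {A : Set Ω // A ∈ 𝒜} ≃ {B : Set Ω // B ∈ ℬ}, ∀ A, P (e A).1 = P A.1

/-- `I` depends solely on the measures of atoms. -/
def DependsOnMeasures (P : Measure Ω) (I : Finset (Set Ω) → ℝ) : Prop :=
  ∀ 𝒜 ℬ : Finset (Set Ω), IsFinPart 𝒜 → IsFinPart ℬ → SameMeasures P 𝒜 ℬ → I 𝒜 = I ℬ

/-- The operation `T_{V,W}`, replacing the atom `A₁ ⊇ V` by `(A₁∖V)∪W` and the atom
`A₂ ⊇ W` by `(A₂∖W)∪V`. -/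
noncomputable def swap (V W A₁ A₂ : Set Ω) (𝒜 : Finset (Set Ω)) : Finset (Set Ω) := by
  classical
  exact insert ((A₁ \ V) ∪ W) (insert ((A₂ \ W) ∪ V) ((𝒜.erase A₁).erase A₂))

/-- `ε(λ) = min (1/(1+λ)) (1/(1+λ⁻¹))`. -/
noncomputable def epsFun (lam : ℝ) : ℝ := min (1 / (1 + lam)) (1 / (1 + lam⁻¹))

/-- An indexed finite measurable partition. -/
def IsPartIdx {n : ℕ} (A : Fin n → Set Ω) : Prop :=
  (∀ i, MeasurableSet (A i)) ∧ (∀ i, A i ≠ ∅) ∧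
    (∀ i j, i ≠ j → Disjoint (A i) (A j)) ∧ (⋃ i, A i) = Set.univ

/-- The finset of atoms of an indexed partition. -/
noncomputable def idxFinset {n : ℕ} (A : Fin n → Set Ω) : Finset (Set Ω) := by
  classical
  exact Finset.univ.image A

/-- The two-atom family `{A, B}`. -/
noncomputable def pairPart (A B : Set Ω) : Finset (Set Ω) := by
  classical
  exact {A, B}

/-- Membership of `𝒜` in `F_λ(V,W)`, with designated distinct atoms `A₁ ⊇ V`,
`A₂ ⊇ W` such that `P(A₂)/P(A₁) = λ`. -/
def memF (P : Measure Ω) (V W : Set Ω) (lam : ℝ) (𝒜 : Finset (Set Ω))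
    (A₁ A₂ : Set Ω) : Prop :=
  IsFinPart 𝒜 ∧ A₁ ∈ 𝒜 ∧ A₂ ∈ 𝒜 ∧ A₁ ≠ A₂ ∧ V ⊆ A₁ ∧ W ⊆ A₂ ∧
    (P A₂).toReal / (P A₁).toReal = lam

/-- Measurable sets with rational measure. -/
def InRat (P : Measure Ω) (A : Set Ω) : Prop :=
  MeasurableSet A ∧ ∃ q : ℚ, (P A).toReal = (q : ℝ)

/-- The characteristic properties of `Δ(V,W,λ)` associated with an additive
partition entropy `I` (Proposition 3 of the paper). -/
def DeltaSpec (P : Measure Ω) (I : Finset (Set Ω) → ℝ)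
    (Δ : Set Ω → Set Ω → ℝ → ℝ) : Prop :=
  (∀ V W : Set Ω, ∀ lam : ℝ, MeasurableSet V → MeasurableSet W → P V = P W →
      0 < lam → Disjoint V W →
      ∀ 𝒜 A₁ A₂, memF P V W lam 𝒜 A₁ A₂ →
        Δ V W lam = I (swap V W A₁ A₂ 𝒜) - I 𝒜) ∧
  (∀ U V W : Set Ω, ∀ lam : ℝ, MeasurableSet U → MeasurableSet V → MeasurableSet W →
      P U = P V → P V = P W → 0 < lam →
      Δ U W lam = Δ U V lam + Δ V W lam) ∧
  (∀ V₁ V₂ W₁ W₂ : Set Ω, ∀ lam : ℝ, MeasurableSet V₁ → MeasurableSet V₂ →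
      MeasurableSet W₁ → MeasurableSet W₂ → Disjoint V₁ V₂ → Disjoint W₁ W₂ →
      P V₁ = P W₁ → P V₂ = P W₂ → 0 < lam →
      Δ (V₁ ∪ V₂) (W₁ ∪ W₂) lam = Δ V₁ W₁ lam + Δ V₂ W₂ lam) ∧
  (∀ V W : Set Ω, ∀ kap lam : ℝ, MeasurableSet V → MeasurableSet W → P V = P W →
      0 < kap → 0 < lam →
      Δ V W (kap * lam) = Δ V W kap + Δ V W lam)

/-! ### Sets of prescribed measure -/

/-- Every value `θ ∈ [P V, P B]` is the measure of some set between `V` and `B`. -/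
lemma exists_between_sets {P : Measure Ω} [IsProbabilityMeasure P] (hD : Darboux P)
    {V B : Set Ω} (hV : MeasurableSet V) (hB : MeasurableSet B) (hVB : V ⊆ B) {θ : ℝ}
    (h1 : P.real V ≤ θ) (h2 : θ ≤ P.real B) :
    ∃ C, MeasurableSet C ∧ V ⊆ C ∧ C ⊆ B ∧ P.real C = θ := by
  rcases h1.eq_or_lt with h1 | h1
  · exact ⟨V, hV, subset_rfl, hVB, h1⟩
  rcases h2.eq_or_lt with h2 | h2
  · exact ⟨B, hB, hVB, subset_rfl, h2.symm⟩
  have hd : P.real (B \ V) = P.real B - P.real V := measureReal_sdiff hVB hV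
  obtain ⟨D, hDm, hDs, hDP⟩ := hD (B \ V) (hB.diff hV) (ENNReal.ofReal (θ - P.real V))
    (by rw [ENNReal.ofReal_pos]; linarith)
    (by rw [← ofReal_measureReal (μ := P) (s := B \ V), hd]
        exact (ENNReal.ofReal_lt_ofReal_iff (by linarith)).2 (by linarith))
  refine ⟨V ∪ D, hV.union hDm, Set.subset_union_left,
    Set.union_subset hVB (hDs.trans Set.sdiff_subset), ?_⟩
  rw [measureReal_union (Set.disjoint_left.2 fun x hx hx' => (hDs hx').2 hx) hDm,
    measureReal_def P D, hDP, ENNReal.toReal_ofReal (by linarith)]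
  ring

/-- Moving the measure of `A` inside the window `V ⊆ · ⊆ B` to a nearby value `θ` costs no more
than `|θ - P A|` in the symmetric difference. -/
lemma exists_near {P : Measure Ω} [IsProbabilityMeasure P] (hD : Darboux P)
    {V A B : Set Ω} (hV : MeasurableSet V) (hA : MeasurableSet A) (hB : MeasurableSet B)
    (hVA : V ⊆ A) (hAB : A ⊆ B) {θ : ℝ}
    (h1 : P.real V ≤ θ) (h2 : θ ≤ P.real B) :
    ∃ C, MeasurableSet C ∧ V ⊆ C ∧ C ⊆ B ∧ P.real C = θ ∧
      P.real (symmDiff A C) = |θ - P.real A| := by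
  rcases le_total θ (P.real A) with h | h
  · obtain ⟨C, hC, hVC, hCA, hCθ⟩ := exists_between_sets hD hV hA hVA h1 h
    refine ⟨C, hC, hVC, hCA.trans hAB, hCθ, ?_⟩
    rw [Set.symmDiff_def, Set.sdiff_eq_empty.2 hCA, Set.union_empty, measureReal_sdiff hCA hC, hCθ,
      abs_of_nonpos (by linarith)]
    ring
  · obtain ⟨C, hC, hAC, hCB, hCθ⟩ := exists_between_sets hD hA hB hAB h h2
    refine ⟨C, hC, hVA.trans hAC, hCB, hCθ, ?_⟩
    rw [Set.symmDiff_def, Set.sdiff_eq_empty.2 hAC, Set.empty_union, measureReal_sdiff hAC hA, hCθ,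
      abs_of_nonneg (by linarith)]

/-! ### Two-atom partitions -/

/-- The `ε`-`δ` form of continuity on two-atom partitions. -/
lemma CtsOnA2.eps_delta {P : Measure Ω} {I : Finset (Set Ω) → ℝ} (h : CtsOnA2 P I)
    {A : Set Ω} (hA : MeasurableSet A) (h0 : 0 < P A) (h1 : P A < 1) {ε : ℝ} (hε : 0 < ε) :
    ∃ δ : ℝ, 0 < δ ∧ ∀ B, MeasurableSet B → P.real (symmDiff A B) < δ →
      |I (twoPart B) - I (twoPart A)| < ε := by
  by_contra! hc
  choose B hB hBs hBI using fun n : ℕ => hc (1 / ((n : ℝ) + 1)) (by positivity)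
  have ht : Tendsto (fun n => (P (symmDiff A (B n))).toReal) atTop (𝓝 0) :=
    squeeze_zero (fun _ => ENNReal.toReal_nonneg) (fun n => (hBs n).le)
      tendsto_one_div_add_atTop_nhds_zero_nat
  have := h A B hA hB h0 h1 ht
  rw [Metric.tendsto_atTop] at this
  obtain ⟨N, hN⟩ := this ε hε
  have := hN N le_rfl
  rw [Real.dist_eq] at this
  exact absurd (hBI N) (not_le.2 this)

lemma isFinPart_twoPart {A : Set Ω} (hA : MeasurableSet A) (h0 : A ≠ ∅) (h1 : Aᶜ ≠ ∅) :
    IsFinPart (twoPart A) := by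
  classical
  refine ⟨?_, ?_, ?_, ?_⟩
  · intro B hB
    simp only [twoPart, Finset.mem_insert, Finset.mem_singleton] at hB
    rcases hB with rfl | rfl
    exacts [hA, hA.compl]
  · intro B hB
    simp only [twoPart, Finset.mem_insert, Finset.mem_singleton] at hB
    rcases hB with rfl | rfl
    exacts [h0, h1]
  · simp only [twoPart, Finset.coe_insert, Finset.coe_singleton]
    exact Set.pairwise_pair.2 fun _ => ⟨disjoint_compl_right, disjoint_compl_left⟩
  · simp [twoPart]

lemma swap_twoPart {α : Type*} {V W A : Set α} (hVW : Disjoint V W)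
    (hVA : V ⊆ A) (hWA : W ⊆ Aᶜ) :
    swap V W A Aᶜ (twoPart A) = twoPart ((A \ V) ∪ W) := by
  classical
  have hc : ((A \ V) ∪ W)ᶜ = (Aᶜ \ W) ∪ V := by
    ext x
    have h1 := @hVA x
    have h2 := @hWA x
    have h3 : x ∈ V → x ∉ W := fun h h' => Set.disjoint_left.1 hVW h h'
    simp only [Set.mem_compl_iff, Set.mem_union, Set.mem_sdiff] at *
    tauto
  have he : ((twoPart A).erase A).erase Aᶜ = ∅ := by
    ext B
    simp only [twoPart, Finset.mem_erase, Finset.mem_insert, Finset.mem_singleton,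
      Finset.notMem_empty]
    tauto
  unfold swap
  ext B
  simp only [Finset.mem_insert]
  rw [he]
  simp [twoPart, hc]

/-- `Δ₃(V,W,λ)` computed on a two-atom partition of ratio `λ`. -/
lemma delta₃_eq {P : Measure Ω} [IsProbabilityMeasure P] {I : Finset (Set Ω) → ℝ}
    {Δ₃ : Set Ω → Set Ω → ℝ → ℝ} (h : DeltaSpec P I Δ₃) {V W A : Set Ω}
    (hV : MeasurableSet V) (hW : MeasurableSet W) (hA : MeasurableSet A)
    (hP : P V = P W) (hVW : Disjoint V W) (hVA : V ⊆ A) (hWA : W ⊆ Aᶜ)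
    (h0 : 0 < P.real A) (h1 : P.real A < 1) :
    Δ₃ V W ((1 - P.real A) / P.real A) =
      I (twoPart ((A \ V) ∪ W)) - I (twoPart A) := by
  have hAc : P.real Aᶜ = 1 - P.real A := probReal_compl_eq_one_sub hA
  have hne : A ≠ ∅ := by rintro rfl; simp at h0
  have hne' : Aᶜ ≠ ∅ := by
    intro he
    rw [he, measureReal_empty] at hAc
    linarith
  have hAA : A ≠ Aᶜ := by
    intro he
    obtain ⟨x, hx⟩ := Set.nonempty_iff_ne_empty.2 hne
    exact (he ▸ hx : x ∈ Aᶜ) hx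
  rw [← swap_twoPart hVW hVA hWA]
  refine h.1 V W _ hV hW hP (div_pos (by linarith) h0) hVW _ A Aᶜ
    ⟨isFinPart_twoPart hA hne hne', by simp [twoPart], by simp [twoPart], hAA, hVA, hWA, ?_⟩
  rw [← hAc]
  rfl

/-! ### Splitting pairs of sets -/

lemma delta₃_self {P : Measure Ω} {I : Finset (Set Ω) → ℝ}
    {Δ₃ : Set Ω → Set Ω → ℝ → ℝ} (h : DeltaSpec P I Δ₃) {V : Set Ω}
    (hV : MeasurableSet V) {lam : ℝ} (hl : 0 < lam) : Δ₃ V V lam = 0 := by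
  have := h.2.1 V V V lam hV hV hV rfl rfl hl
  linarith

lemma measure_sdiff_eq {P : Measure Ω} [IsProbabilityMeasure P] {V W V₀ W₀ : Set Ω}
    (hV₀ : MeasurableSet V₀) (hW₀ : MeasurableSet W₀)
    (h1 : V₀ ⊆ V) (h2 : W₀ ⊆ W) (hP : P V = P W) (hP₀ : P V₀ = P W₀) :
    P (V \ V₀) = P (W \ W₀) := by
  rw [measure_sdiff h1 hV₀.nullMeasurableSet (measure_ne_top _ _),
    measure_sdiff h2 hW₀.nullMeasurableSet (measure_ne_top _ _), hP, hP₀]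

/-- Splitting off corresponding subsets of equal measure. -/
lemma delta₃_split {P : Measure Ω} [IsProbabilityMeasure P] {I : Finset (Set Ω) → ℝ}
    {Δ₃ : Set Ω → Set Ω → ℝ → ℝ} (h : DeltaSpec P I Δ₃) {V W V₀ W₀ : Set Ω}
    (hV : MeasurableSet V) (hW : MeasurableSet W)
    (hV₀ : MeasurableSet V₀) (hW₀ : MeasurableSet W₀)
    (h1 : V₀ ⊆ V) (h2 : W₀ ⊆ W) (hP : P V = P W) (hP₀ : P V₀ = P W₀)
    {lam : ℝ} (hl : 0 < lam) :
    Δ₃ V W lam = Δ₃ V₀ W₀ lam + Δ₃ (V \ V₀) (W \ W₀) lam := by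
  have := h.2.2.1 V₀ (V \ V₀) W₀ (W \ W₀) lam hV₀ (hV.diff hV₀) hW₀ (hW.diff hW₀)
    Set.disjoint_sdiff_right Set.disjoint_sdiff_right hP₀
    (measure_sdiff_eq hV₀ hW₀ h1 h2 hP hP₀) hl
  rwa [Set.union_sdiff_cancel h1, Set.union_sdiff_cancel h2] at this

/-- The common part of `V` and `W` does not contribute. -/
lemma delta₃_sdiff {P : Measure Ω} [IsProbabilityMeasure P] {I : Finset (Set Ω) → ℝ}
    {Δ₃ : Set Ω → Set Ω → ℝ → ℝ} (h : DeltaSpec P I Δ₃) {V W : Set Ω}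
    (hV : MeasurableSet V) (hW : MeasurableSet W) (hP : P V = P W)
    {lam : ℝ} (hl : 0 < lam) :
    P (V \ W) = P (W \ V) ∧ Δ₃ V W lam = Δ₃ (V \ W) (W \ V) lam := by
  have hm := hV.inter hW
  have e1 : V \ (V ∩ W) = V \ W := by ext; simp
  have e2 : W \ (V ∩ W) = W \ V := by ext x; simp only [Set.mem_sdiff, Set.mem_inter_iff]; tauto
  constructor
  · rw [← e1, ← e2]
    exact measure_sdiff_eq hm hm Set.inter_subset_left Set.inter_subset_right hP rfl
  · rw [delta₃_split h hV hW hm hm Set.inter_subset_left Set.inter_subset_right hP rfl hl, e1, e2,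
      delta₃_self h hm hl, zero_add]

/-! ### Linearity in `log₂ λ` -/

lemma symmDiff_swap_subset {α : Type*} (A C V W : Set α) :
    symmDiff ((A \ V) ∪ W) ((C \ V) ∪ W) ⊆ symmDiff A C := by
  intro x
  simp only [Set.mem_symmDiff, Set.mem_union, Set.mem_sdiff]
  tauto

lemma measure_swap {P : Measure Ω} [IsProbabilityMeasure P] {V W A : Set Ω}
    (hV : MeasurableSet V) (hW : MeasurableSet W) (hA : MeasurableSet A)
    (hP : P V = P W) (hVA : V ⊆ A) (hWA : W ⊆ Aᶜ) :
    P ((A \ V) ∪ W) = P A := by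
  rw [measure_union (Set.disjoint_left.2 fun x hx hx' => hWA hx' hx.1) hW, ← hP, add_comm]
  rw [← measure_union Set.disjoint_sdiff_right (hA.diff hV), Set.union_sdiff_cancel hVA]

lemma measure_bounds {P : Measure Ω} [IsProbabilityMeasure P] {A : Set Ω}
    (h0 : 0 < P.real A) (h1 : P.real A < 1) : 0 < P A ∧ P A < 1 := by
  constructor
  · rw [pos_iff_ne_zero]
    intro h
    rw [measureReal_def, h] at h0
    simp at h0
  · rw [← ofReal_measureReal (μ := P) (s := A), ENNReal.ofReal_lt_one]
    exact h1

/-- For small disjoint `V`, `W` the function `x ↦ Δ₃(V,W,2ˣ)` is continuous at `0`. -/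
lemma continuousAt_of_le_quarter {P : Measure Ω} [IsProbabilityMeasure P] (hD : Darboux P)
    {I : Finset (Set Ω) → ℝ} (hcts : CtsOnA2 P I)
    {Δ₃ : Set Ω → Set Ω → ℝ → ℝ} (h : DeltaSpec P I Δ₃) {V W : Set Ω}
    (hV : MeasurableSet V) (hW : MeasurableSet W) (hP : P V = P W) (hVW : Disjoint V W)
    (hq : P.real V ≤ 1 / 4) :
    ContinuousAt (fun x : ℝ => Δ₃ V W (2 ^ x)) 0 := by
  have hqW : P.real W ≤ 1 / 4 := by rwa [measureReal_def, ← hP]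
  have hWc : P.real Wᶜ = 1 - P.real W := probReal_compl_eq_one_sub hW
  have hVWc : V ⊆ Wᶜ := fun x hx hx' => Set.disjoint_left.1 hVW hx hx'
  obtain ⟨A, hA, hVA, hAW, hAP⟩ := exists_between_sets hD hV hW.compl hVWc (θ := 1 / 2)
    (by linarith) (by linarith)
  have hWA : W ⊆ Aᶜ := fun x hx hx' => hAW hx' hx
  have hA' : MeasurableSet ((A \ V) ∪ W) := (hA.diff hV).union hW
  obtain ⟨b0, b1⟩ := measure_bounds (P := P) (A := A) (by linarith) (by linarith)
  have hsw := measure_swap hV hW hA hP hVA hWA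
  rw [Metric.continuousAt_iff']
  intro ε hε
  obtain ⟨δ₁, hδ₁, H₁⟩ := hcts.eps_delta hA b0 b1 (half_pos hε)
  obtain ⟨δ₂, hδ₂, H₂⟩ := hcts.eps_delta hA' (hsw ▸ b0) (hsw ▸ b1) (half_pos hε)
  -- `{C, Cᶜ}` has ratio `P Cᶜ / P C = 2ˣ` exactly when `P C = 1/(1+2ˣ)`.
  have hθ : ContinuousAt (fun x : ℝ => 1 / (1 + (2 : ℝ) ^ x)) 0 := by
    refine continuousAt_const.div (continuousAt_const.add
      (Real.continuousAt_const_rpow (by norm_num))) (by norm_num)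
  rw [Metric.continuousAt_iff'] at hθ
  filter_upwards [hθ (min (min δ₁ δ₂) (1 / 4)) (by positivity)] with x hx
  rw [Real.dist_eq, Real.rpow_zero, lt_min_iff, lt_min_iff] at hx
  norm_num only at hx
  obtain ⟨⟨hx1, hx2⟩, hx3⟩ := hx
  rw [abs_lt] at hx3
  set θ : ℝ := 1 / (1 + (2 : ℝ) ^ x) with hθd
  have h2x : (0 : ℝ) < 2 ^ x := Real.rpow_pos_of_pos (by norm_num) x
  obtain ⟨C, hC, hVC, hCW, hCP, hCs⟩ := exists_near hD hV hA hW.compl hVA hAW (θ := θ)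
    (by linarith) (by linarith)
  have hWC : W ⊆ Cᶜ := fun x hx hx' => hCW hx' hx
  have e1 := delta₃_eq h hV hW hA hP hVW hVA hWA (by linarith) (by linarith)
  have e2 := delta₃_eq h hV hW hC hP hVW hVC hWC (by linarith) (by linarith)
  have r1 : (1 - P.real A) / P.real A = 2 ^ (0 : ℝ) := by rw [hAP]; norm_num
  have r2 : (1 - P.real C) / P.real C = 2 ^ x := by rw [hCP, hθd]; field_simp; ring
  rw [r1] at e1
  rw [r2] at e2
  have k1 := H₁ C hC (by rw [hCs, hAP]; exact hx1)
  have k2 := H₂ ((C \ V) ∪ W) ((hC.diff hV).union hW)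
    (lt_of_le_of_lt (measureReal_mono (symmDiff_swap_subset A C V W))
      (by rw [hCs, hAP]; exact hx2))
  rw [Real.dist_eq, e1, e2]
  rw [abs_lt] at *
  constructor <;> linarith [k1.1, k1.2, k2.1, k2.2]

/-- `x ↦ Δ₃(V,W,2ˣ)` is continuous at `0` for arbitrary `V`, `W` of equal measure. -/
lemma continuousAt_delta₃ {P : Measure Ω} [IsProbabilityMeasure P] (hD : Darboux P)
    {I : Finset (Set Ω) → ℝ} (hcts : CtsOnA2 P I)
    {Δ₃ : Set Ω → Set Ω → ℝ → ℝ} (h : DeltaSpec P I Δ₃) {V W : Set Ω}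
    (hV : MeasurableSet V) (hW : MeasurableSet W) (hP : P V = P W) :
    ContinuousAt (fun x : ℝ => Δ₃ V W (2 ^ x)) 0 := by
  have hpow : ∀ x : ℝ, (0 : ℝ) < 2 ^ x := fun x => Real.rpow_pos_of_pos (by norm_num) x
  have hP' := (delta₃_sdiff h hV hW hP (lam := 1) one_pos).1
  simp_rw [fun x : ℝ => (delta₃_sdiff h hV hW hP (hpow x)).2]
  have hVW : Disjoint (V \ W) (W \ V) := disjoint_sdiff_sdiff
  have hVm := hV.diff hW
  have hWm := hW.diff hV
  clear hV hW hP
  generalize V \ W = X at *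
  generalize W \ V = Y at *
  clear V W
  rename' X => V, Y => W
  -- Disjoint sets of equal measure have measure at most `1/2`; halves have at most `1/4`.
  have hPr : P.real V = P.real W := by rw [measureReal_def, hP', measureReal_def]
  have hle : P.real V + P.real W ≤ 1 := by
    rw [← measureReal_union hVW hWm]; exact measureReal_le_one
  have h0 : 0 ≤ P.real V := measureReal_nonneg
  obtain ⟨V₀, hV₀, -, hVs, hVP⟩ := exists_between_sets hD MeasurableSet.empty hVm
    (Set.empty_subset V) (θ := P.real V / 2) (by simp only [measureReal_empty]; linarith) (by linarith)
  obtain ⟨W₀, hW₀, -, hWs, hWP⟩ := exists_between_sets hD MeasurableSet.empty hWm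
    (Set.empty_subset W) (θ := P.real V / 2) (by simp only [measureReal_empty]; linarith) (by linarith)
  have hP₀ : P V₀ = P W₀ := by
    rw [← ofReal_measureReal (μ := P) (s := V₀), hVP, ← hWP, ofReal_measureReal]
  simp_rw [fun x : ℝ => delta₃_split h hVm hWm hV₀ hW₀ hVs hWs hP' hP₀ (hpow x)]
  refine (continuousAt_of_le_quarter hD hcts h hV₀ hW₀ hP₀ (hVW.mono hVs hWs)
    (by linarith)).add ?_
  refine continuousAt_of_le_quarter hD hcts h (hVm.diff hV₀) (hWm.diff hW₀)
    (measure_sdiff_eq hV₀ hW₀ hVs hWs hP' hP₀)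
    (hVW.mono Set.sdiff_subset Set.sdiff_subset) ?_
  rw [measureReal_sdiff hVs hV₀]
  linarith

/-- A continuous solution of the multiplicative Cauchy equation is a multiple of `log₂`. -/
lemma delta₃_eq_mul_logb {P : Measure Ω} [IsProbabilityMeasure P] (hD : Darboux P)
    {I : Finset (Set Ω) → ℝ} (hcts : CtsOnA2 P I)
    {Δ₃ : Set Ω → Set Ω → ℝ → ℝ} (h : DeltaSpec P I Δ₃) {V W : Set Ω}
    (hV : MeasurableSet V) (hW : MeasurableSet W) (hP : P V = P W) {lam : ℝ} (hl : 0 < lam) :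
    Δ₃ V W lam = Δ₃ V W 2 * Real.logb 2 lam := by
  have hpow : ∀ x : ℝ, (0 : ℝ) < 2 ^ x := fun x => Real.rpow_pos_of_pos (by norm_num) x
  let g : ℝ →+ ℝ := AddMonoidHom.mk' (fun x : ℝ => Δ₃ V W (2 ^ x)) (by
    intro x y
    rw [Real.rpow_add (by norm_num)]
    exact h.2.2.2 V W _ _ hV hW hP (hpow x) (hpow y))
  have hg : Continuous g :=
    continuous_of_continuousAt_zero g (continuousAt_delta₃ hD hcts h hV hW hP)
  have := map_real_smul g hg (Real.logb 2 lam) 1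
  simp only [g, AddMonoidHom.mk'_apply, smul_eq_mul, mul_one, Real.rpow_one] at this
  rw [Real.rpow_logb (by norm_num) (by norm_num) hl] at this
  rw [this, mul_comm]

/-! ### Uniform continuity -/

/-- `Δ₃(V,W,2)` is uniformly small on sets of small measure. -/
lemma delta₃_small {P : Measure Ω} [IsProbabilityMeasure P] (hD : Darboux P)
    {I : Finset (Set Ω) → ℝ} (hcts : CtsOnA2 P I)
    {Δ₃ : Set Ω → Set Ω → ℝ → ℝ} (h : DeltaSpec P I Δ₃) {ε : ℝ} (hε : 0 < ε) :
    ∃ δ : ℝ, 0 < δ ∧ ∀ V W : Set Ω, MeasurableSet V → MeasurableSet W → P V = P W →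
      P.real V < δ → |Δ₃ V W 2| < ε := by
  obtain ⟨A, hA, -, -, hAP⟩ := exists_between_sets hD (MeasurableSet.empty (α := Ω))
    MeasurableSet.univ (Set.empty_subset _) (θ := 1 / 4) (by simp) (by simp; norm_num)
  obtain ⟨b0, b1⟩ := measure_bounds (P := P) (A := A) (by linarith) (by linarith)
  obtain ⟨δ, hδ, H⟩ := hcts.eps_delta hA b0 b1 (half_pos hε)
  refine ⟨min (δ / 2) (1 / 12), by positivity, fun V W hV hW hP hp => ?_⟩
  obtain ⟨hP', e⟩ := delta₃_sdiff h hV hW hP (lam := 2) two_pos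
  replace hp := lt_of_le_of_lt (measureReal_mono (μ := P) (Set.sdiff_subset (s := V) (t := W))) hp
  rw [e]
  have hVW : Disjoint (V \ W) (W \ V) := disjoint_sdiff_sdiff
  have hVm := hV.diff hW
  have hWm := hW.diff hV
  clear hV hW hP e
  generalize V \ W = X at *
  generalize W \ V = Y at *
  clear V W
  rename' X => V, Y => W
  rw [lt_min_iff] at hp
  have hPr : P.real V = P.real W := by rw [measureReal_def, hP', measureReal_def]
  set B : Set Ω := (A ∪ V) \ W with hBdef
  have hB : MeasurableSet B := (hA.union hVm).diff hWm
  have hVB : V ⊆ B := fun x hx => ⟨Or.inr hx, fun hx' => Set.disjoint_left.1 hVW hx hx'⟩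
  have hWB : W ⊆ Bᶜ := fun x hx hx' => hx'.2 hx
  have hsub1 : symmDiff A B ⊆ V ∪ W := by
    intro x
    simp only [hBdef, Set.mem_symmDiff, Set.mem_union, Set.mem_sdiff]
    tauto
  have hsub2 : symmDiff A ((B \ V) ∪ W) ⊆ V ∪ W := by
    intro x
    simp only [hBdef, Set.mem_symmDiff, Set.mem_union, Set.mem_sdiff]
    tauto
  have hun : P.real (V ∪ W) < δ := by
    have := measureReal_union_le (μ := P) V W
    linarith
  have k1 := H B hB ((measureReal_mono hsub1).trans_lt hun)
  have k2 := H _ ((hB.diff hVm).union hWm) ((measureReal_mono hsub2).trans_lt hun)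
  have hBu : P.real B ≤ 1 / 3 := by
    have h1 := measureReal_union_le (μ := P) A V
    have h2 := measureReal_mono (μ := P) (Set.sdiff_subset (s := A ∪ V) (t := W))
    linarith
  have hBl : 0 < P.real B := by
    have h1 : A ⊆ B ∪ W := by
      intro x hx
      by_cases hxW : x ∈ W
      · exact Or.inr hxW
      · exact Or.inl ⟨Or.inl hx, hxW⟩
    have h2 := (measureReal_mono (μ := P) h1).trans (measureReal_union_le B W)
    linarith
  have e := delta₃_eq h hVm hWm hB hP' hVW hVB hWB hBl (by linarith)
  have hlam : (2 : ℝ) ≤ (1 - P.real B) / P.real B := by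
    rw [le_div_iff₀ hBl]; linarith
  rw [delta₃_eq_mul_logb hD hcts h hVm hWm hP' (by linarith)] at e
  have hlog : 1 ≤ Real.logb 2 ((1 - P.real B) / P.real B) := by
    rw [Real.le_logb_iff_rpow_le (by norm_num) (by linarith), Real.rpow_one]
    exact hlam
  calc |Δ₃ V W 2| ≤ |Δ₃ V W 2| * |Real.logb 2 ((1 - P.real B) / P.real B)| :=
        le_mul_of_one_le_right (abs_nonneg _) (hlog.trans (le_abs_self _))
    _ = |I (twoPart ((B \ V) ∪ W)) - I (twoPart B)| := by rw [← abs_mul, e]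
    _ < ε := by
      rw [abs_lt] at *
      constructor <;> linarith [k1.1, k1.2, k2.1, k2.2]

/-- For a continuous-on-`𝔄₂` additive partition entropy the
quantity `Δ(V,W,λ)` has the form `Δ(V,W)·log₂ λ`, where `Δ(·,·)` is a
uniformly continuous additive cocycle. -/
theorem delta_eq_const_mul_log
    {Ω : Type*} [MeasurableSpace Ω] (P : Measure Ω) [IsProbabilityMeasure P]
    (hD : Darboux P) (I : Finset (Set Ω) → ℝ)
    (hAPE : IsAPE P I) (hcts : CtsOnA2 P I)
    (Δ₃ : Set Ω → Set Ω → ℝ → ℝ) (hΔ₃ : DeltaSpec P I Δ₃) :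
    ∃ Δ : Set Ω → Set Ω → ℝ,
      (∀ V W : Set Ω, MeasurableSet V → MeasurableSet W → P V = P W →
        ∀ lam : ℝ, 0 < lam → Δ₃ V W lam = Δ V W * Real.logb 2 lam) ∧
      (∀ U V W : Set Ω, MeasurableSet U → MeasurableSet V → MeasurableSet W →
        P U = P V → P V = P W → Δ U W = Δ U V + Δ V W) ∧
      (∀ V₁ V₂ W₁ W₂ : Set Ω, MeasurableSet V₁ → MeasurableSet V₂ →
        MeasurableSet W₁ → MeasurableSet W₂ → Disjoint V₁ V₂ → Disjoint W₁ W₂ →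
        P V₁ = P W₁ → P V₂ = P W₂ →
        Δ (V₁ ∪ V₂) (W₁ ∪ W₂) = Δ V₁ W₁ + Δ V₂ W₂) ∧
      (∀ ε : ℝ, 0 < ε → ∃ δ : ℝ, 0 < δ ∧
        ∀ V W V' W' : Set Ω, MeasurableSet V → MeasurableSet W →
          MeasurableSet V' → MeasurableSet W' → P V = P W → P V' = P W' →
          (P (symmDiff V V')).toReal + (P (symmDiff W W')).toReal < δ →
          |Δ V' W' - Δ V W| < ε) := by
  refine ⟨fun V W => Δ₃ V W 2, fun V W hV hW hP lam hl => ?_, ?_, ?_, ?_⟩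
  · exact delta₃_eq_mul_logb hD hcts hΔ₃ hV hW hP hl
  · exact fun U V W hU hV hW h1 h2 => hΔ₃.2.1 U V W 2 hU hV hW h1 h2 two_pos
  · exact fun V₁ V₂ W₁ W₂ a b c d e f g k => hΔ₃.2.2.1 V₁ V₂ W₁ W₂ 2 a b c d e f g k two_pos
  intro ε hε
  obtain ⟨δ, hδ, H⟩ := delta₃_small hD hcts hΔ₃ (half_pos hε)
  refine ⟨δ, hδ, fun V W V' W' hV hW hV' hW' hP hP' hs => ?_⟩
  change P.real (symmDiff V V') + P.real (symmDiff W W') < δ at hs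
  have hPr : P.real V = P.real W := by rw [measureReal_def, hP, measureReal_def]
  have hPr' : P.real V' = P.real W' := by rw [measureReal_def, hP', measureReal_def]
  -- `P(X) - P(X ∩ Y) = P(X ∖ Y)` is at most the measure of the symmetric difference.
  have key : ∀ X Y : Set Ω, MeasurableSet X → MeasurableSet Y →
      P.real X - P.real (X ∩ Y) ≤ P.real (symmDiff X Y) ∧
      P.real Y - P.real (X ∩ Y) ≤ P.real (symmDiff X Y) := by
    intro X Y hX hY
    have h1 := measureReal_inter_add_sdiff (μ := P) (s := X) hY
    have h2 := measureReal_inter_add_sdiff (μ := P) (s := Y) hX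
    rw [Set.inter_comm] at h2
    have h3 : P.real (X \ Y) ≤ P.real (symmDiff X Y) :=
      measureReal_mono fun x hx => Or.inl hx
    have h4 : P.real (Y \ X) ≤ P.real (symmDiff X Y) :=
      measureReal_mono fun x hx => Or.inr hx
    constructor <;> linarith
  obtain ⟨a1, a2⟩ := key V V' hV hV'
  obtain ⟨a3, a4⟩ := key W W' hW hW'
  have n1 : 0 ≤ P.real (symmDiff V V') := measureReal_nonneg
  have n2 : 0 ≤ P.real (symmDiff W W') := measureReal_nonneg
  -- Common parts of equal measure `θ`, the smaller of the two intersection measures.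
  set θ := min (P.real (V ∩ V')) (P.real (W ∩ W')) with hθ
  have hθ0 : 0 ≤ θ := le_min measureReal_nonneg measureReal_nonneg
  obtain ⟨V₀, hV₀, -, hVs, hVP⟩ := exists_between_sets hD MeasurableSet.empty (hV.inter hV')
    (Set.empty_subset _) (θ := θ) (by simpa using hθ0) (min_le_left _ _)
  obtain ⟨W₀, hW₀, -, hWs, hWP⟩ := exists_between_sets hD MeasurableSet.empty (hW.inter hW')
    (Set.empty_subset _) (θ := θ) (by simpa using hθ0) (min_le_right _ _)
  have hP₀ : P V₀ = P W₀ := by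
    rw [← ofReal_measureReal (μ := P) (s := V₀), hVP, ← hWP, ofReal_measureReal]
  have s1 := hVs.trans Set.inter_subset_left
  have s2 := hVs.trans Set.inter_subset_right
  have s3 := hWs.trans Set.inter_subset_left
  have s4 := hWs.trans Set.inter_subset_right
  have d1 : P.real (V \ V₀) < δ := by
    rw [measureReal_sdiff s1 hV₀, hVP]
    rcases min_choice (P.real (V ∩ V')) (P.real (W ∩ W')) with hm | hm <;>
      rw [hθ, hm] <;> linarith
  have d2 : P.real (V' \ V₀) < δ := by
    rw [measureReal_sdiff s2 hV₀, hVP]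
    rcases min_choice (P.real (V ∩ V')) (P.real (W ∩ W')) with hm | hm <;>
      rw [hθ, hm] <;> linarith
  have k1 := H _ _ (hV.diff hV₀) (hW.diff hW₀) (measure_sdiff_eq hV₀ hW₀ s1 s3 hP hP₀) d1
  have k2 := H _ _ (hV'.diff hV₀) (hW'.diff hW₀) (measure_sdiff_eq hV₀ hW₀ s2 s4 hP' hP₀) d2
  simp only
  rw [delta₃_split hΔ₃ hV hW hV₀ hW₀ s1 s3 hP hP₀ two_pos,
    delta₃_split hΔ₃ hV' hW' hV₀ hW₀ s2 s4 hP' hP₀ two_pos]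
  rw [abs_lt] at *
  constructor <;> linarith [k1.1, k1.2, k2.1, k2.2]

end APE
end

section
/- Let (Ω,Σ,P) be a probability space whose measure P has the Darboux property, and let 𝓡 := {A∈Σ : P(A)∈ℚ}. Suppose Δ(V,W) ∈ ℝ is defined for all pairs V, W ∈ 𝓡 with P(V)=P(W) and satisfies: (1) Δ(U,W) = Δ(U,V) + Δ(V,W) for any U, V, W ∈ 𝓡 of equal measure; (2) Δ(V,W) = Δ(V₁,W₁) + Δ(V₂,W₂) whenever V = V₁⊔V₂, W = W₁⊔W₂ with Vᵢ, Wᵢ ∈ 𝓡 and P(Vᵢ)=P(Wᵢ), i=1,2. Then there is a unique function m : 𝓡 → ℝ with m(A∪B)=m(A)+m(B) for disjoint A, B ∈ 𝓡 and m(Ω)=0, such that Δ(V,W) = m(W) − m(V) for all V, W belonging to a common finite subalgebra of Σ contained in 𝓡 and satisfying P(V)=P(W). Moreover, for every A ∈ 𝓡 and every C ∈ ℝ, if |Δ(B,A)| ≤ C for all B ∈ 𝓡 with P(B)=P(A), then |m(A)| ≤ C. -/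
/-!
The set function is built one denominator at a time. By the Darboux property a set of measure
`k / n` splits into `k` tiles of measure `1 / n` (up to a null remainder, which has to be carried
along since `Δ` may be nonzero on null sets). The chain rule gives a primitive `φ` of `Δ`, that
is, `Δ V W = φ W - φ V` (`IsCocycle.exists_primitive`); by additivity of `Δ` the sum of `φ` over
the tiles of a set does not depend on the tiling (`IsCocycle.tiling_sub`). This tile sum is
therefore finitely additive on sets with measure in `(1 / n) ℤ`, is still a primitive of `Δ`, and
subtracting a multiple of `P` makes it vanish on `Ω` (`IsCocycle.exists_lev`).

Rigidity (`eq_zero_of_lev`): the difference of two such functions is equal on any two tiles of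
`Ω`, and these equal values add up to zero, so the difference vanishes. Hence the functions for
different `n` are compatible and glue to `m` (`IsCocycle.exists_glued`). The same argument gives
uniqueness, because it only compares disjoint sets, and disjoint sets of rational measure always
lie in a common finite subalgebra (`exists_common_part`).

For the bound, cyclic translates of `k` among `n` tiles of `Ω` produce sets `B s` of measure `P A`
on which `m` has mean zero, so `m A` is the mean of the numbers `Δ (B s) A`
(`abs_le_of_additive`).
-/

open MeasureTheory Filter Topology

namespace APE

variable {Ω : Type*} [MeasurableSpace Ω]

/-- Specification of the set function `m` on sets of rational measure associated
with a cocycle `Δ`. -/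
def RatMesSpec {Ω : Type*} [MeasurableSpace Ω] (P : Measure Ω)
    (Δ : Set Ω → Set Ω → ℝ) (m : Set Ω → ℝ) : Prop :=
  (∀ A B : Set Ω, InRat P A → InRat P B → Disjoint A B → m (A ∪ B) = m A + m B) ∧
  m Set.univ = 0 ∧
  ∀ V W : Set Ω,
    (∃ 𝒢 : Finset (Set Ω), IsFinPart 𝒢 ∧
      (∀ 𝒯 : Finset (Set Ω), 𝒯 ⊆ 𝒢 → InRat P (⋃₀ (𝒯 : Set (Set Ω)))) ∧
      (∃ 𝒮 : Finset (Set Ω), 𝒮 ⊆ 𝒢 ∧ V = ⋃₀ (𝒮 : Set (Set Ω))) ∧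
      (∃ 𝒮 : Finset (Set Ω), 𝒮 ⊆ 𝒢 ∧ W = ⋃₀ (𝒮 : Set (Set Ω)))) →
    P V = P W → Δ V W = m W - m V

/-! ### Finite additivity over families of sets -/

lemma additive_biUnion {Ω ι : Type*} {Q : Set Ω → Prop} (h0 : Q ∅)
    (hU : ∀ A B, Q A → Q B → Disjoint A B → Q (A ∪ B)) {f : Set Ω → ℝ}
    (hf : ∀ A B, Q A → Q B → Disjoint A B → f (A ∪ B) = f A + f B)
    (G : ι → Set Ω) (hG : ∀ i, Q (G i)) (hd : Pairwise (Function.onFun Disjoint G))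
    (s : Finset ι) :
    Q (⋃ i ∈ s, G i) ∧ f (⋃ i ∈ s, G i) = ∑ i ∈ s, f (G i) := by
  classical
  induction s using Finset.induction_on with
  | empty =>
    have := hf ∅ ∅ h0 h0 (by simp)
    simp only [Set.union_self] at this
    refine ⟨by simpa using h0, ?_⟩
    simp only [Finset.notMem_empty, Set.iUnion_of_empty, Set.iUnion_empty, Finset.sum_empty]
    linarith
  | insert a s ha ih =>
    have hdis : Disjoint (G a) (⋃ i ∈ s, G i) := by
      simp only [Set.disjoint_iUnion_right]
      intro i hi
      exact hd (by rintro rfl; exact ha hi)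
    rw [Finset.set_biUnion_insert, Finset.sum_insert ha, ← ih.2]
    exact ⟨hU _ _ (hG a) ih.1 hdis, hf _ _ (hG a) ih.1 hdis⟩

lemma InRat.empty (P : Measure Ω) : InRat P ∅ := ⟨MeasurableSet.empty, 0, by simp⟩

lemma InRat.univ (P : Measure Ω) [IsProbabilityMeasure P] : InRat P Set.univ :=
  ⟨MeasurableSet.univ, 1, by simp⟩

lemma InRat.union {P : Measure Ω} [IsProbabilityMeasure P] {A B : Set Ω}
    (hA : InRat P A) (hB : InRat P B) (hd : Disjoint A B) : InRat P (A ∪ B) := by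
  obtain ⟨hA, p, hp⟩ := hA
  obtain ⟨hB, q, hq⟩ := hB
  refine ⟨hA.union hB, p + q, ?_⟩
  have := measureReal_union (μ := P) hd hB
  simp only [measureReal_def] at this
  rw [this, hp, hq]; push_cast; ring

lemma InRat.compl {P : Measure Ω} [IsProbabilityMeasure P] {A : Set Ω}
    (hA : InRat P A) : InRat P Aᶜ := by
  obtain ⟨hA, p, hp⟩ := hA
  refine ⟨hA.compl, 1 - p, ?_⟩
  have := measureReal_compl (μ := P) hA
  simp only [measureReal_def] at this
  rw [this, hp]; simp

/-- The cocycle hypotheses on `Δ`, bundled: the chain rule and additivity over disjoint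
unions, on pairs of sets of equal rational measure. -/
structure IsCocycle (P : Measure Ω) (Δ : Set Ω → Set Ω → ℝ) : Prop where
  chain : ∀ U V W : Set Ω, InRat P U → InRat P V → InRat P W →
      P U = P V → P V = P W → Δ U W = Δ U V + Δ V W
  union : ∀ V₁ V₂ W₁ W₂ : Set Ω, InRat P V₁ → InRat P V₂ → InRat P W₁ →
      InRat P W₂ → Disjoint V₁ V₂ → Disjoint W₁ W₂ → P V₁ = P W₁ → P V₂ = P W₂ →
      Δ (V₁ ∪ V₂) (W₁ ∪ W₂) = Δ V₁ W₁ + Δ V₂ W₂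

lemma IsCocycle.self {P : Measure Ω} {Δ : Set Ω → Set Ω → ℝ} (h : IsCocycle P Δ)
    {A : Set Ω} (hA : InRat P A) : Δ A A = 0 := by
  have := h.chain A A A hA hA hA rfl rfl
  linarith

lemma IsCocycle.biUnion {P : Measure Ω} [IsProbabilityMeasure P] {Δ : Set Ω → Set Ω → ℝ}
    (h : IsCocycle P Δ) {ι : Type*} (G H : ι → Set Ω) (hG : ∀ i, InRat P (G i))
    (hH : ∀ i, InRat P (H i)) (hGd : Pairwise (Function.onFun Disjoint G))
    (hHd : Pairwise (Function.onFun Disjoint H)) (hP : ∀ i, P (G i) = P (H i))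
    (s : Finset ι) :
    P (⋃ i ∈ s, G i) = P (⋃ i ∈ s, H i) ∧
      Δ (⋃ i ∈ s, G i) (⋃ i ∈ s, H i) = ∑ i ∈ s, Δ (G i) (H i) := by
  classical
  have hrat : ∀ (K : ι → Set Ω), (∀ i, InRat P (K i)) →
      Pairwise (Function.onFun Disjoint K) → ∀ s : Finset ι, InRat P (⋃ i ∈ s, K i) :=
    fun K hK hKd s => (additive_biUnion (f := fun _ => 0) (InRat.empty P)
      (fun _ _ => InRat.union) (by simp) K hK hKd s).1
  have hdis : ∀ (K : ι → Set Ω), Pairwise (Function.onFun Disjoint K) →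
      ∀ (s : Finset ι) (a : ι), a ∉ s → Disjoint (K a) (⋃ i ∈ s, K i) := by
    intro K hK s a ha
    simp only [Set.disjoint_iUnion_right]
    intro i hi
    exact hK (by rintro rfl; exact ha hi)
  induction s using Finset.induction_on with
  | empty => simpa using h.self (InRat.empty P)
  | insert a s ha ih =>
    rw [Finset.set_biUnion_insert, Finset.set_biUnion_insert, Finset.sum_insert ha, ← ih.2]
    constructor
    · rw [measure_union (hdis G hGd s a ha) (hrat G hG hGd s).1,
        measure_union (hdis H hHd s a ha) (hrat H hH hHd s).1, hP, ih.1]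
    · exact h.union _ _ _ _ (hG a) (hrat G hG hGd s) (hH a) (hrat H hH hHd s)
        (hdis G hGd s a ha) (hdis H hHd s a ha) (hP a) ih.1

/-! ### Sets of measure `k / n` and their tilings -/

/-- Measurable sets whose measure is an integer multiple of `1 / n`. -/
def Lev (P : Measure Ω) (n : ℕ) (A : Set Ω) : Prop :=
  MeasurableSet A ∧ ∃ k : ℕ, P.real A = k / n

lemma Lev.inRat {P : Measure Ω} {n : ℕ} {A : Set Ω} (h : Lev P n A) : InRat P A := by
  obtain ⟨hA, k, hk⟩ := h
  refine ⟨hA, k / n, ?_⟩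
  rw [← measureReal_def, hk]; push_cast; rfl

lemma InRat.exists_lev {P : Measure Ω} {A : Set Ω} (h : InRat P A) :
    ∃ n : ℕ, 0 < n ∧ Lev P n A := by
  obtain ⟨hA, q, hq⟩ := h
  have hq0 : 0 ≤ q := by
    have : (0 : ℝ) ≤ q := hq ▸ ENNReal.toReal_nonneg
    exact_mod_cast this
  refine ⟨q.den, q.den_pos, hA, q.num.toNat, ?_⟩
  rw [measureReal_def, hq]
  have h1 : ((q.num.toNat : ℤ) : ℝ) = (q.num : ℝ) := by
    rw [Int.toNat_of_nonneg (Rat.num_nonneg.2 hq0)]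
  rw [Int.cast_natCast] at h1
  rw [h1]
  exact Rat.cast_def q

lemma Lev.mul {P : Measure Ω} {n : ℕ} {A : Set Ω} (h : Lev P n A) {m : ℕ} (hm : 0 < m) :
    Lev P (n * m) A := by
  obtain ⟨hA, k, hk⟩ := h
  refine ⟨hA, k * m, ?_⟩
  have : (m : ℝ) ≠ 0 := by positivity
  rw [hk]; push_cast; rw [mul_div_mul_right _ _ this]

lemma Lev.empty (P : Measure Ω) (n : ℕ) : Lev P n ∅ := ⟨MeasurableSet.empty, 0, by simp⟩

lemma Lev.univ (P : Measure Ω) [IsProbabilityMeasure P] {n : ℕ} (hn : 0 < n) :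
    Lev P n Set.univ := by
  have : (n : ℝ) ≠ 0 := by positivity
  exact ⟨MeasurableSet.univ, n, by simp [this]⟩

lemma Lev.union {P : Measure Ω} [IsProbabilityMeasure P] {n : ℕ} {A B : Set Ω}
    (hA : Lev P n A) (hB : Lev P n B) (hd : Disjoint A B) : Lev P n (A ∪ B) := by
  obtain ⟨hA, p, hp⟩ := hA
  obtain ⟨hB, q, hq⟩ := hB
  refine ⟨hA.union hB, p + q, ?_⟩
  rw [measureReal_union hd hB, hp, hq]; push_cast; ring

lemma Lev.compl {P : Measure Ω} [IsProbabilityMeasure P] {n : ℕ} (hn : 0 < n) {A : Set Ω}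
    (hA : Lev P n A) : Lev P n Aᶜ := by
  obtain ⟨hA, p, hp⟩ := hA
  have hn' : (0 : ℝ) < n := by positivity
  have hle : p ≤ n := by
    have : P.real A ≤ 1 := measureReal_le_one
    rw [hp, div_le_one hn'] at this
    exact_mod_cast this
  refine ⟨hA.compl, n - p, ?_⟩
  rw [measureReal_compl hA, hp, Nat.cast_sub hle]
  simp; field_simp

lemma real_eq_iff (P : Measure Ω) [IsProbabilityMeasure P] (A B : Set Ω) :
    P.real A = P.real B ↔ P A = P B := by
  simp only [measureReal_def]
  exact ENNReal.toReal_eq_toReal_iff' (measure_ne_top _ _) (measure_ne_top _ _)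

/-- A decomposition of `A` into disjoint tiles `G i` of measure `1 / n` and a null
remainder `N`. The remainder is needed because a null set may be nonempty and `Δ` need not
vanish on null sets. -/
structure Tiling (P : Measure Ω) (n : ℕ) (A N : Set Ω) {ι : Type*} (G : ι → Set Ω) :
    Prop where
  measN : MeasurableSet N
  null : P N = 0
  meas : ∀ i, MeasurableSet (G i)
  real : ∀ i, P.real (G i) = 1 / n
  disjN : ∀ i, Disjoint N (G i)
  disj : Pairwise (Function.onFun Disjoint G)
  eq : N ∪ ⋃ i, G i = A

lemma Tiling.lev {P : Measure Ω} {n : ℕ} {A N : Set Ω} {ι : Type*} {G : ι → Set Ω}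
    (h : Tiling P n A N G) (i : ι) : Lev P n (G i) :=
  ⟨h.meas i, 1, by simpa using h.real i⟩

lemma Tiling.levN {P : Measure Ω} {n : ℕ} {A N : Set Ω} {ι : Type*} {G : ι → Set Ω}
    (h : Tiling P n A N G) : Lev P n N :=
  ⟨h.measN, 0, by simp [measureReal_def, h.null]⟩

lemma Tiling.disjUnion {P : Measure Ω} {n : ℕ} {A N : Set Ω} {ι : Type*} {G : ι → Set Ω}
    (h : Tiling P n A N G) : Disjoint N (⋃ i, G i) := by
  simpa only [Set.disjoint_iUnion_right] using h.disjN

lemma Tiling.measure {P : Measure Ω} [IsProbabilityMeasure P] {n : ℕ} {A N : Set Ω}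
    {ι : Type*} [Fintype ι] {G : ι → Set Ω} (h : Tiling P n A N G) :
    P.real A = Fintype.card ι / n := by
  rw [← h.eq, measureReal_union h.disjUnion (MeasurableSet.iUnion h.meas),
    measureReal_iUnion_fintype h.disj h.meas]
  simp [h.real, measureReal_def P N, h.null, div_eq_mul_inv]

lemma Tiling.additive {P : Measure Ω} [IsProbabilityMeasure P] {n : ℕ} {A N : Set Ω}
    {ι : Type*} [Fintype ι] {G : ι → Set Ω} (h : Tiling P n A N G) {f : Set Ω → ℝ}
    (hf : ∀ A B, Lev P n A → Lev P n B → Disjoint A B → f (A ∪ B) = f A + f B) :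
    f A = f N + ∑ i, f (G i) := by
  have := additive_biUnion (Lev.empty P n) (fun _ _ => Lev.union) hf G h.lev h.disj Finset.univ
  simp only [Finset.mem_univ, Set.iUnion_true] at this
  rw [← h.eq, hf _ _ h.levN this.1 h.disjUnion, this.2]

lemma Tiling.reindex {P : Measure Ω} {n : ℕ} {A N : Set Ω}
    {ι κ : Type*} {G : ι → Set Ω} (h : Tiling P n A N G) (e : κ ≃ ι) :
    Tiling P n A N (G ∘ e) where
  measN := h.measN
  null := h.null
  meas i := h.meas _
  real i := h.real _
  disjN i := h.disjN _
  disj i j hij := h.disj (e.injective.ne hij)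
  eq := by rw [← h.eq]; congr 1; exact e.surjective.iUnion_comp G

lemma Tiling.sum {P : Measure Ω} {n : ℕ} {A N B M : Set Ω}
    {ι κ : Type*} {G : ι → Set Ω} {H : κ → Set Ω} (h : Tiling P n A N G)
    (h' : Tiling P n B M H) (hd : Disjoint A B) :
    Tiling P n (A ∪ B) (N ∪ M) (Sum.elim G H) := by
  have hN : N ⊆ A := h.eq ▸ Set.subset_union_left
  have hM : M ⊆ B := h'.eq ▸ Set.subset_union_left
  have hG : ∀ i, G i ⊆ A := fun i =>
    h.eq ▸ (Set.subset_iUnion G i).trans Set.subset_union_right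
  have hH : ∀ i, H i ⊆ B := fun i =>
    h'.eq ▸ (Set.subset_iUnion H i).trans Set.subset_union_right
  refine ⟨h.measN.union h'.measN, measure_union_null h.null h'.null, ?_, ?_, ?_, ?_, ?_⟩
  · rintro (i | i)
    exacts [h.meas i, h'.meas i]
  · rintro (i | i)
    exacts [h.real i, h'.real i]
  · rintro (i | i) <;> simp only [Sum.elim_inl, Sum.elim_inr, Set.disjoint_union_left]
    · exact ⟨h.disjN i, (hd.mono (hG i) hM).symm⟩
    · exact ⟨hd.mono hN (hH i), h'.disjN i⟩
  · rintro (i | i) (j | j) hij <;> simp only [Function.onFun, Sum.elim_inl, Sum.elim_inr]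
    · exact h.disj (by rintro rfl; exact hij rfl)
    · exact hd.mono (hG i) (hH j)
    · exact (hd.mono (hG j) (hH i)).symm
    · exact h'.disj (by rintro rfl; exact hij rfl)
  · rw [Set.iUnion_sum]
    simp only [Sum.elim_inl, Sum.elim_inr]
    rw [Set.union_union_union_comm, h.eq, h'.eq]

/-- A set of positive measure `(k + 1) / n` can be tiled without remainder: the last tile
absorbs whatever is left. -/
lemma exists_tiling_succ {P : Measure Ω} [IsProbabilityMeasure P] (hD : Darboux P) {n : ℕ}
    (hn : 0 < n) (k : ℕ) : ∀ A : Set Ω, MeasurableSet A → P.real A = ((k + 1 : ℕ) : ℝ) / n →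
      ∃ G : Fin (k + 1) → Set Ω, Tiling P n A ∅ G := by
  have hn' : (0 : ℝ) < n := by positivity
  induction k with
  | zero =>
    intro A hA hk
    refine ⟨fun _ => A, MeasurableSet.empty, by simp, fun _ => hA, fun _ => by simpa using hk,
      by simp, ?_, ?_⟩
    · intro i j hij
      exact absurd (Fin.ext (by omega)) hij
    · simp [Set.iUnion_const]
  | succ k ih =>
    intro A hA hk
    obtain ⟨B, hB, hBA, hPB⟩ := hD A hA (ENNReal.ofReal (1 / n))
      (by rw [ENNReal.ofReal_pos]; positivity)
      (by
        rw [← ofReal_measureReal (measure_ne_top P A), hk]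
        apply (ENNReal.ofReal_lt_ofReal_iff (by positivity)).2
        apply div_lt_div_of_pos_right _ hn'
        push_cast
        have : (0 : ℝ) ≤ k := by positivity
        linarith)
    have hB' : P.real B = 1 / n := by
      rw [measureReal_def, hPB, ENNReal.toReal_ofReal (by positivity)]
    obtain ⟨G, hG⟩ := ih (A \ B) (hA.diff hB) (by
      rw [measureReal_sdiff hBA hB, hk, hB']; push_cast; ring)
    have hT : Tiling P n B ∅ (fun _ : Fin 1 => B) :=
      ⟨MeasurableSet.empty, by simp, fun _ => hB, fun _ => hB', by simp,
        fun i j hij => absurd (Subsingleton.elim i j) hij, by simp [Set.iUnion_const]⟩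
    have := hG.sum hT disjoint_sdiff_self_left
    rw [Set.sdiff_union_of_subset hBA, Set.union_self] at this
    exact ⟨_, this.reindex finSumFinEquiv.symm⟩

lemma Lev.exists_tiling {P : Measure Ω} [IsProbabilityMeasure P] (hD : Darboux P) {n : ℕ}
    (hn : 0 < n) {A : Set Ω} (hA : Lev P n A) :
    ∃ (k : ℕ) (N : Set Ω) (G : Fin k → Set Ω), Tiling P n A N G := by
  obtain ⟨hA, k, hk⟩ := hA
  cases k with
  | zero =>
    refine ⟨0, A, fun _ => ∅, hA, ?_, fun i => i.elim0, fun i => i.elim0, fun i => i.elim0,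
      fun i => i.elim0, by simp⟩
    rw [← measureReal_eq_zero_iff, hk]; simp
  | succ k =>
    obtain ⟨G, hG⟩ := exists_tiling_succ hD hn k A hA hk
    exact ⟨k + 1, ∅, G, hG⟩

/-- A finitely additive function on the sets of measure in `(1 / n) ℤ` which vanishes on `Ω`
and takes equal values on disjoint sets of equal measure is zero: it is constant on the tiles
of `Ω`, and the values on those tiles sum to zero. -/
lemma eq_zero_of_lev {P : Measure Ω} [IsProbabilityMeasure P] (hD : Darboux P) {n : ℕ}
    (hn : 0 < n) {d : Set Ω → ℝ}
    (hadd : ∀ A B, Lev P n A → Lev P n B → Disjoint A B → d (A ∪ B) = d A + d B)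
    (huniv : d Set.univ = 0)
    (heq : ∀ A B, Lev P n A → Lev P n B → Disjoint A B → P A = P B → d A = d B)
    {A : Set Ω} (hA : Lev P n A) : d A = 0 := by
  obtain ⟨k, N, G, hG⟩ := hA.exists_tiling hD hn
  obtain ⟨l, M, H, hH⟩ := (hA.compl hn).exists_tiling hD hn
  have h0 : d ∅ = 0 := by
    have := hadd ∅ ∅ (Lev.empty P n) (Lev.empty P n) (by simp)
    simp only [Set.union_self] at this
    linarith
  have hnull : ∀ N, Lev P n N → P N = 0 → d N = 0 := fun N hN hN0 => by
    rw [heq N ∅ hN (Lev.empty P n) (by simp) (by simp [hN0]), h0]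
  have hT := hG.sum hH disjoint_compl_right
  rw [Set.union_compl_self] at hT
  have hsum := hT.additive hadd
  rw [huniv, hnull _ hT.levN hT.null, zero_add] at hsum
  have hconst : ∀ x y, d (Sum.elim G H x) = d (Sum.elim G H y) := by
    intro x y
    by_cases hxy : x = y
    · rw [hxy]
    · exact heq _ _ (hT.lev x) (hT.lev y) (hT.disj hxy)
        ((real_eq_iff P _ _).1 (by rw [hT.real, hT.real]))
  have hzero : ∀ x, d (Sum.elim G H x) = 0 := by
    intro x
    rw [Finset.sum_congr rfl (fun y _ => hconst y x), Finset.sum_const, nsmul_eq_mul,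
      eq_comm, mul_eq_zero] at hsum
    refine hsum.resolve_left ?_
    have : Nonempty (Fin k ⊕ Fin l) := ⟨x⟩
    rw [Finset.card_univ]
    exact_mod_cast Fintype.card_ne_zero
  rw [hG.additive hadd, hnull N hG.levN hG.null, zero_add]
  exact Finset.sum_eq_zero fun i _ => hzero (Sum.inl i)

/-! ### Construction of the set function -/

/-- A primitive of the cocycle: `φ A` is `Δ` from a fixed representative of the measure class
of `A` to `A`. It is not additive in general. -/
lemma IsCocycle.exists_primitive {P : Measure Ω} {Δ : Set Ω → Set Ω → ℝ}
    (h : IsCocycle P Δ) : ∃ φ : Set Ω → ℝ, ∀ V W, InRat P V → InRat P W → P V = P W →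
      Δ V W = φ W - φ V := by
  classical
  have : ∀ p : ENNReal, ∃ C : Set Ω, (∃ A, InRat P A ∧ P A = p) → InRat P C ∧ P C = p := by
    intro p
    by_cases hp : ∃ A, InRat P A ∧ P A = p
    · obtain ⟨A, hA⟩ := hp
      exact ⟨A, fun _ => hA⟩
    · exact ⟨∅, fun h => absurd h hp⟩
  choose C hC using this
  refine ⟨fun A => Δ (C (P A)) A, fun V W hV hW hVW => ?_⟩
  have hc := hC (P V) ⟨V, hV, rfl⟩
  have := h.chain (C (P V)) V W hc.1 hV hW hc.2 hVW
  simp only [← hVW]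
  linarith

/-- With `φ` a primitive of `Δ`, the quantity `Δ ∅ N + ∑ φ (G i)` is again a primitive of `Δ`
on tiled sets; taking `V = W`, it does not depend on the tiling. -/
lemma IsCocycle.tiling_sub {P : Measure Ω} [IsProbabilityMeasure P] {Δ : Set Ω → Set Ω → ℝ}
    (h : IsCocycle P Δ) {φ : Set Ω → ℝ}
    (hφ : ∀ V W, InRat P V → InRat P W → P V = P W → Δ V W = φ W - φ V)
    {n : ℕ} (hn : 0 < n) {V W N M : Set Ω} {ι κ : Type*} [Fintype ι] [Fintype κ]
    {G : ι → Set Ω} {H : κ → Set Ω} (hG : Tiling P n V N G) (hH : Tiling P n W M H)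
    (hVW : P V = P W) :
    Δ V W = (Δ ∅ M + ∑ i, φ (H i)) - (Δ ∅ N + ∑ i, φ (G i)) := by
  have hn' : (n : ℝ) ≠ 0 := by positivity
  have hcard : Fintype.card ι = Fintype.card κ := by
    have := (real_eq_iff P V W).2 hVW
    rw [hG.measure, hH.measure, div_left_inj' hn'] at this
    exact_mod_cast this
  let e : ι ≃ κ := Fintype.equivOfCardEq hcard
  have hH' := hH.reindex e
  have hP : ∀ i, P (G i) = P ((H ∘ e) i) := fun i =>
    (real_eq_iff P _ _).1 (by rw [hG.real, hH'.real])
  have hGr := fun i => (hG.lev i).inRat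
  have hHr := fun i => (hH'.lev i).inRat
  have hb := h.biUnion G (H ∘ e) hGr hHr hG.disj hH'.disj hP Finset.univ
  have hrat : ∀ (K : ι → Set Ω), (∀ i, InRat P (K i)) →
      Pairwise (Function.onFun Disjoint K) → InRat P (⋃ i, K i) := fun K hK hKd => by
    have := (additive_biUnion (f := fun _ => 0) (InRat.empty P)
      (fun _ _ => InRat.union) (by simp) K hK hKd Finset.univ).1
    simpa using this
  simp only [Finset.mem_univ, Set.iUnion_true] at hb
  have hu := h.union N (⋃ i, G i) M (⋃ i, (H ∘ e) i) hG.levN.inRat (hrat G hGr hG.disj)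
    hH'.levN.inRat (hrat _ hHr hH'.disj) hG.disjUnion hH'.disjUnion
    (by rw [hG.null, hH.null]) hb.1
  rw [hG.eq, hH'.eq, hb.2] at hu
  have hc := h.chain ∅ N M (InRat.empty P) hG.levN.inRat hH'.levN.inRat
    (by simp [hG.null]) (by rw [hG.null, hH.null])
  have hs : ∑ i, Δ (G i) ((H ∘ e) i) = ∑ i, φ (H i) - ∑ i, φ (G i) := by
    rw [Finset.sum_congr rfl (fun i _ => hφ _ _ (hGr i) (hHr i) (hP i)),
      Finset.sum_sub_distrib]
    congr 1
    exact e.sum_comp (fun i => φ (H i))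
  rw [hu, hs]
  linarith

/-- The required set function on the sets of measure in `(1 / n) ℤ`: the tile sum of
a primitive of `Δ`, corrected by a multiple of `P` so as to vanish on `Ω`. -/
lemma IsCocycle.exists_lev {P : Measure Ω} [IsProbabilityMeasure P] (hD : Darboux P)
    {Δ : Set Ω → Set Ω → ℝ} (h : IsCocycle P Δ) {n : ℕ} (hn : 0 < n) :
    ∃ F : Set Ω → ℝ,
      (∀ A B, Lev P n A → Lev P n B → Disjoint A B → F (A ∪ B) = F A + F B) ∧
      F Set.univ = 0 ∧
      ∀ V W, Lev P n V → Lev P n W → P V = P W → Δ V W = F W - F V := by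
  obtain ⟨φ, hφ⟩ := h.exists_primitive
  have : ∀ A, ∃ x : ℝ, Lev P n A → ∃ (k : ℕ) (N : Set Ω) (G : Fin k → Set Ω),
      Tiling P n A N G ∧ x = Δ ∅ N + ∑ i, φ (G i) := by
    intro A
    by_cases hA : Lev P n A
    · obtain ⟨k, N, G, hG⟩ := hA.exists_tiling hD hn
      exact ⟨_, fun _ => ⟨k, N, G, hG, rfl⟩⟩
    · exact ⟨0, fun h => absurd h hA⟩
  choose S hS using this
  have hadd : ∀ A B, Lev P n A → Lev P n B → Disjoint A B → S (A ∪ B) = S A + S B := by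
    intro A B hA hB hd
    obtain ⟨k, N, G, hG, hSA⟩ := hS A hA
    obtain ⟨l, M, H, hH, hSB⟩ := hS B hB
    obtain ⟨j, L, K, hK, hSAB⟩ := hS _ (hA.union hB hd)
    have h3 := h.tiling_sub hφ hn hK (hG.sum hH hd) rfl
    rw [h.self (hA.union hB hd).inRat] at h3
    simp only [Fintype.sum_sum_type, Sum.elim_inl, Sum.elim_inr] at h3
    have h4 := h.union ∅ ∅ N M (InRat.empty P) (InRat.empty P) hG.levN.inRat hH.levN.inRat
      (by simp) (hd.mono (hG.eq ▸ Set.subset_union_left) (hH.eq ▸ Set.subset_union_left))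
      (by simp [hG.null]) (by simp [hH.null])
    rw [Set.union_self] at h4
    rw [hSA, hSB, hSAB]
    linarith
  refine ⟨fun A => S A - P.real A * S Set.univ, ?_, by simp, ?_⟩
  · intro A B hA hB hd
    simp only
    rw [hadd A B hA hB hd, measureReal_union hd hB.1]
    ring
  · intro V W hV hW hVW
    obtain ⟨k, N, G, hG, hSV⟩ := hS V hV
    obtain ⟨l, M, H, hH, hSW⟩ := hS W hW
    simp only
    rw [(real_eq_iff P V W).2 hVW, h.tiling_sub hφ hn hG hH hVW, hSV, hSW]
    ring

/-- The set functions of the different levels agree by `eq_zero_of_lev`, so they glue. The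
resulting `m` satisfies `Δ V W = m W - m V` for all `V`, `W` of equal rational measure, with
no common finite subalgebra needed. -/
lemma IsCocycle.exists_glued {P : Measure Ω} [IsProbabilityMeasure P] (hD : Darboux P)
    {Δ : Set Ω → Set Ω → ℝ} (h : IsCocycle P Δ) :
    ∃ m : Set Ω → ℝ,
      (∀ A B, InRat P A → InRat P B → Disjoint A B → m (A ∪ B) = m A + m B) ∧
      m Set.univ = 0 ∧
      ∀ V W, InRat P V → InRat P W → P V = P W → Δ V W = m W - m V := by
  choose! F hF using fun (n : ℕ) (hn : 0 < n) => h.exists_lev hD hn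
  have hmul : ∀ n k : ℕ, 0 < n → 0 < k → ∀ A, Lev P n A → F (n * k) A = F n A := by
    intro n k hn hk A hA
    obtain ⟨a1, u1, d1⟩ := hF n hn
    obtain ⟨a2, u2, d2⟩ := hF (n * k) (Nat.mul_pos hn hk)
    refine sub_eq_zero.1 (eq_zero_of_lev hD hn (d := fun A => F (n * k) A - F n A)
      ?_ ?_ ?_ hA)
    · intro A B hA hB hd
      rw [a1 A B hA hB hd, a2 A B (hA.mul hk) (hB.mul hk) hd]
      ring
    · rw [u1, u2, sub_zero]
    · intro A B hA hB _ hP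
      have e1 := d1 A B hA hB hP
      have e2 := d2 A B (hA.mul hk) (hB.mul hk) hP
      linarith
  have hex : ∀ A, ∃ x : ℝ, ∀ n, 0 < n → Lev P n A → x = F n A := by
    intro A
    by_cases hA : ∃ n, 0 < n ∧ Lev P n A
    · obtain ⟨k, hk, hkA⟩ := hA
      refine ⟨F k A, fun n hn hnA => ?_⟩
      rw [← hmul n k hn hk A hnA, mul_comm, hmul k n hk hn A hkA]
    · exact ⟨0, fun n hn hnA => absurd ⟨n, hn, hnA⟩ hA⟩
  choose m hm using hex
  have hcommon : ∀ A B, InRat P A → InRat P B → ∃ n, 0 < n ∧ Lev P n A ∧ Lev P n B := by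
    intro A B hA hB
    obtain ⟨k, hk, hkA⟩ := hA.exists_lev
    obtain ⟨l, hl, hlB⟩ := hB.exists_lev
    exact ⟨k * l, Nat.mul_pos hk hl, hkA.mul hl, mul_comm l k ▸ hlB.mul hk⟩
  refine ⟨m, ?_, ?_, ?_⟩
  · intro A B hA hB hd
    obtain ⟨n, hn, hnA, hnB⟩ := hcommon A B hA hB
    rw [hm _ n hn (hnA.union hnB hd), hm _ n hn hnA, hm _ n hn hnB]
    exact (hF n hn).1 A B hnA hnB hd
  · rw [hm _ 1 one_pos (Lev.univ P one_pos)]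
    exact (hF 1 one_pos).2.1
  · intro V W hV hW hP
    obtain ⟨n, hn, hnV, hnW⟩ := hcommon V W hV hW
    rw [hm _ n hn hnV, hm _ n hn hnW]
    exact (hF n hn).2.2 V W hnV hnW hP

/-! ### Common subalgebras, and the bound -/

/-- Two disjoint sets of rational measure lie in the finite subalgebra they generate, all of
whose members have rational measure. -/
lemma exists_common_part {P : Measure Ω} [IsProbabilityMeasure P] {V W : Set Ω}
    (hV : InRat P V) (hW : InRat P W) (hd : Disjoint V W) :
    ∃ 𝒢 : Finset (Set Ω), IsFinPart 𝒢 ∧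
      (∀ 𝒯 : Finset (Set Ω), 𝒯 ⊆ 𝒢 → InRat P (⋃₀ (𝒯 : Set (Set Ω)))) ∧
      (∃ 𝒮 : Finset (Set Ω), 𝒮 ⊆ 𝒢 ∧ V = ⋃₀ (𝒮 : Set (Set Ω))) ∧
      (∃ 𝒮 : Finset (Set Ω), 𝒮 ⊆ 𝒢 ∧ W = ⋃₀ (𝒮 : Set (Set Ω))) := by
  classical
  have hR := (hV.union hW hd).compl
  have hmem : ∀ A ∈ ({V, W, (V ∪ W)ᶜ} : Finset (Set Ω)).filter (· ≠ ∅), InRat P A := by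
    intro A hA
    simp only [Finset.mem_filter, Finset.mem_insert, Finset.mem_singleton] at hA
    rcases hA.1 with rfl | rfl | rfl
    exacts [hV, hW, hR]
  have hdis : ((({V, W, (V ∪ W)ᶜ} : Finset (Set Ω)).filter (· ≠ ∅) : Finset (Set Ω)) :
      Set (Set Ω)).PairwiseDisjoint id := by
    have h1 : Disjoint V (V ∪ W)ᶜ := disjoint_compl_right.mono_left Set.subset_union_left
    have h2 : Disjoint W (V ∪ W)ᶜ := disjoint_compl_right.mono_left Set.subset_union_right
    intro A hA B hB hAB
    simp only [Finset.coe_filter, Finset.mem_insert, Finset.mem_singleton,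
      Set.mem_ofPred_eq] at hA hB
    simp only [Function.onFun, id]
    rcases hA.1 with rfl | rfl | rfl <;> rcases hB.1 with rfl | rfl | rfl <;>
      first
        | exact absurd rfl hAB
        | assumption
        | (apply Disjoint.symm; assumption)
  have hsub : ∀ A ∈ ({V, W, (V ∪ W)ᶜ} : Finset (Set Ω)), ∃ 𝒮 : Finset (Set Ω),
      𝒮 ⊆ ({V, W, (V ∪ W)ᶜ} : Finset (Set Ω)).filter (· ≠ ∅) ∧
        A = ⋃₀ (𝒮 : Set (Set Ω)) := by
    intro A hA
    by_cases h0 : A = ∅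
    · exact ⟨∅, by simp, by simp [h0]⟩
    · exact ⟨{A}, by simpa only [Finset.singleton_subset_iff, Finset.mem_filter] using ⟨hA, h0⟩,
        by simp⟩
  refine ⟨({V, W, (V ∪ W)ᶜ} : Finset (Set Ω)).filter (· ≠ ∅),
    ⟨fun A hA => (hmem A hA).1, fun A hA => (Finset.mem_filter.1 hA).2, hdis, ?_⟩, ?_,
    hsub V (by simp), hsub W (by simp)⟩
  · refine Set.eq_univ_of_forall fun x => ?_
    have hx : ∃ A ∈ ({V, W, (V ∪ W)ᶜ} : Finset (Set Ω)), x ∈ A := by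
      by_cases h1 : x ∈ V
      · exact ⟨V, by simp, h1⟩
      by_cases h2 : x ∈ W
      · exact ⟨W, by simp, h2⟩
      exact ⟨(V ∪ W)ᶜ, by simp, by simp [h1, h2]⟩
    obtain ⟨A, hA, hxA⟩ := hx
    exact ⟨A, Finset.mem_coe.2 (Finset.mem_filter.2
      ⟨hA, fun h0 => by rw [h0] at hxA; exact hxA⟩), hxA⟩
  · intro 𝒯 h𝒯
    have := (additive_biUnion (f := fun _ => 0) (InRat.empty P) (fun _ _ => InRat.union)
      (by simp) (fun A : 𝒯 => (A : Set Ω)) (fun A => hmem _ (h𝒯 A.2))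
      (fun A B hAB => hdis (h𝒯 A.2) (h𝒯 B.2) (fun h => hAB (Subtype.ext h)))
      Finset.univ).1
    rw [Set.sUnion_eq_iUnion]
    simpa using this

/-- Tile `Ω` by `n` sets `G 0, …, G (n - 1)` and translate a set of `k` indices cyclically:
the translates give sets `B s` of measure `P A = k / n` on which `m` has mean zero, so `m A` is
the mean of `m A - m (B s)`. -/
lemma abs_le_of_additive {P : Measure Ω} [IsProbabilityMeasure P] (hD : Darboux P)
    {m : Set Ω → ℝ}
    (hadd : ∀ A B, InRat P A → InRat P B → Disjoint A B → m (A ∪ B) = m A + m B)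
    (huniv : m Set.univ = 0) {A : Set Ω} (hA : InRat P A) {C : ℝ}
    (hC : ∀ B, InRat P B → P B = P A → |m A - m B| ≤ C) : |m A| ≤ C := by
  classical
  obtain ⟨n, hn, hnA⟩ := hA.exists_lev
  obtain ⟨n, rfl⟩ := Nat.exists_eq_succ_of_ne_zero hn.ne'
  rw [Nat.succ_eq_add_one] at *
  obtain ⟨-, k, hk⟩ := hnA
  have hn' : (0 : ℝ) < ((n + 1 : ℕ) : ℝ) := by positivity
  have hle : k ≤ n + 1 := by
    have : P.real A ≤ 1 := measureReal_le_one
    rw [hk, div_le_one hn'] at this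
    exact_mod_cast this
  obtain ⟨G, hG⟩ := exists_tiling_succ hD hn n Set.univ MeasurableSet.univ
    (by rw [div_self hn'.ne']; simp)
  obtain ⟨T, hT⟩ := Finset.exists_subset_card_eq (s := (Finset.univ : Finset (Fin (n + 1))))
    (n := k) (by simpa using hle)
  have hGr := fun i => (hG.lev i).inRat
  let B : Fin (n + 1) → Set Ω := fun s => ⋃ i ∈ T, G (i + s)
  have hdis : ∀ s, Pairwise (Function.onFun Disjoint fun i => G (i + s)) := fun s i j hij =>
    hG.disj (fun h => hij (add_right_cancel h))
  have hB := fun s => additive_biUnion (InRat.empty P) (fun _ _ => InRat.union) hadd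
    (fun i => G (i + s)) (fun i => hGr _) (hdis s) T
  have hBP : ∀ s, P (B s) = P A := by
    intro s
    rw [← real_eq_iff, hk,
      measureReal_biUnion_finset (fun i _ j _ hij => hdis s hij) (fun i _ => hG.meas _)]
    simp only [hG.real, Finset.sum_const, nsmul_eq_mul, hT.2]
    ring
  have hsum0 : ∑ i, m (G i) = 0 := by
    have h0 := hadd ∅ ∅ (InRat.empty P) (InRat.empty P) (by simp)
    rw [Set.union_self] at h0
    have := hG.additive (fun A B hA hB => hadd A B hA.inRat hB.inRat)
    linarith
  have hmean : ∑ s, m (B s) = 0 := by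
    rw [Finset.sum_congr rfl (fun s _ => (hB s).2), Finset.sum_comm]
    refine Finset.sum_eq_zero fun i _ => ?_
    rw [← hsum0]
    exact Equiv.sum_comp (Equiv.addLeft i) (fun j => m (G j))
  have hkey : ((n + 1 : ℕ) : ℝ) * m A = ∑ s, (m A - m (B s)) := by
    rw [Finset.sum_sub_distrib, hmean]
    simp
  have hbound : |((n + 1 : ℕ) : ℝ) * m A| ≤ ((n + 1 : ℕ) : ℝ) * C := by
    rw [hkey]
    refine (Finset.abs_sum_le_sum_abs _ _).trans ?_
    refine (Finset.sum_le_sum fun s _ => hC (B s) (hB s).1 (hBP s)).trans ?_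
    simp
  rw [abs_mul, abs_of_pos hn'] at hbound
  exact (mul_le_mul_iff_of_pos_left hn').1 hbound

/-- Construction of the unique finitely-additive set function on
sets of rational measure associated with a cocycle `Δ`. -/
theorem exists_unique_rat_measure_of_cocycle
    {Ω : Type*} [MeasurableSpace Ω] (P : Measure Ω) [IsProbabilityMeasure P]
    (hD : Darboux P) (Δ : Set Ω → Set Ω → ℝ)
    (h1 : ∀ U V W : Set Ω, InRat P U → InRat P V → InRat P W →
      P U = P V → P V = P W → Δ U W = Δ U V + Δ V W)
    (h2 : ∀ V₁ V₂ W₁ W₂ : Set Ω, InRat P V₁ → InRat P V₂ → InRat P W₁ →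
      InRat P W₂ → Disjoint V₁ V₂ → Disjoint W₁ W₂ → P V₁ = P W₁ → P V₂ = P W₂ →
      Δ (V₁ ∪ V₂) (W₁ ∪ W₂) = Δ V₁ W₁ + Δ V₂ W₂) :
    ∃ m : Set Ω → ℝ, RatMesSpec P Δ m ∧
      (∀ m' : Set Ω → ℝ, RatMesSpec P Δ m' → ∀ A : Set Ω, InRat P A → m' A = m A) ∧
      ∀ A : Set Ω, InRat P A → ∀ C : ℝ,
        (∀ B : Set Ω, InRat P B → P B = P A → |Δ B A| ≤ C) → |m A| ≤ C := by
  obtain ⟨m, hadd, huniv, hdiff⟩ := IsCocycle.exists_glued hD (Δ := Δ) ⟨h1, h2⟩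
  refine ⟨m, ⟨hadd, huniv, ?_⟩, ?_, ?_⟩
  · rintro V W ⟨𝒢, -, hrat, ⟨𝒮, h𝒮, rfl⟩, ⟨𝒮', h𝒮', rfl⟩⟩ hP
    exact hdiff _ _ (hrat _ h𝒮) (hrat _ h𝒮') hP
  · rintro m' ⟨hadd', huniv', hdiff'⟩ A hA
    obtain ⟨n, hn, hnA⟩ := hA.exists_lev
    refine sub_eq_zero.1 (eq_zero_of_lev hD hn (d := fun A => m' A - m A) ?_ ?_ ?_ hnA)
    · intro A B hA hB hd
      rw [hadd A B hA.inRat hB.inRat hd, hadd' A B hA.inRat hB.inRat hd]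
      ring
    · rw [huniv, huniv', sub_zero]
    · intro A B hA hB hd hP
      have e1 := hdiff A B hA.inRat hB.inRat hP
      have e2 := hdiff' A B (exists_common_part hA.inRat hB.inRat hd) hP
      linarith
  · intro A hA C hC
    refine abs_le_of_additive hD hadd huniv hA fun B hB hP => ?_
    rw [← hdiff B A hB hA hP]
    exact hC B hB hP

end APE
end

section
/- Let (Ω,Σ,P) be a probability space whose measure P has the Darboux property. Suppose Δ(V,W) ∈ ℝ is defined for all pairs of measurable sets V, W with P(V)=P(W) and satisfies: (1) Δ(U,W) = Δ(U,V) + Δ(V,W) for any U, V, W of equal measure; (2) Δ(V,W) = Δ(V₁,W₁) + Δ(V₂,W₂) whenever V = V₁⊔V₂, W = W₁⊔W₂ with P(Vᵢ)=P(Wᵢ), i=1,2; (3) Δ is uniformly continuous with respect to the pseudometric ((V,W),(V',W')) ↦ P(V△V') + P(W△W'). Then there is a unique finitely-additive set function m : Σ → ℝ, absolutely continuous with respect to P, such that m(Ω)=0 and Δ(V,W) = m(W) − m(V) for all measurable V, W with P(V)=P(W). Moreover, for every A ∈ Σ, |m(A)| ≤ sup{|Δ(B,A)| : B∈Σ, P(B)=P(A)}.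 -/
/-!
The measure `m` is obtained by averaging `Δ(B, A)` over a translation-invariant family of sets `B`
with `P(B) = P(A)`.

By the Darboux property there is a chain of measurable sets containing one set of each measure
`t ∈ [0,1]` (a maximal chain up to null sets has no gaps), and hence a measure-preserving map `θ`
from `Ω` to the circle `ℝ/ℤ` (`Darboux.exists_measurePreserving`). Let `arc θ x a` be the
preimage under `θ` of the half-open arc of length `a` starting at `x`, and put
`m(A) = ∫ Δ(arc θ x (P A), A) dx`, the integral being over the circle; the integrand is continuous
because `Δ` is.

* Since `arc θ x (a + b)` is the disjoint union of `arc θ x a` and `arc θ (x + a) b`, property (2)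
  and translation invariance of the integral give additivity of `m`.
* The cocycle property (1), integrated over `x`, gives `Δ(V,W) = m(W) - m(V)`.
* `m(Ω) = ∫ Δ(Ω,Ω) dx = 0`; the bound on `|m(A)|` is the bound of an average by a supremum, and
  absolute continuity follows from the uniform continuity of `Δ` at `(∅,∅)`.

For uniqueness, the difference `d` of two solutions is additive, absolutely continuous, vanishes on
`Ω` and depends only on `P(A)`. Absolute continuity makes it bounded (`AbsCont.bounded`), while any
value of `|d|` can be doubled indefinitely, so `d = 0` (`eq_zero_of_depends_on_measure`).
-/

open MeasureTheory Filter Topology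

namespace APE

variable {Ω : Type*} [MeasurableSpace Ω]

/-- Specification of the finitely additive set function `m` associated with a
uniformly continuous cocycle `Δ`. -/
def MesSpec {Ω : Type*} [MeasurableSpace Ω] (P : Measure Ω)
    (Δ : Set Ω → Set Ω → ℝ) (m : Set Ω → ℝ) : Prop :=
  FinAdd m ∧ AbsCont P m ∧ m Set.univ = 0 ∧
  ∀ V W : Set Ω, MeasurableSet V → MeasurableSet W → P V = P W →
    Δ V W = m W - m V

/-! ### Chains of measurable sets without gaps -/

/-- The Darboux property in terms of real-valued measures, with the endpoints included. -/
lemma Darboux.exists_measureReal_eq {P : Measure Ω}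
    [IsProbabilityMeasure P] (hD : Darboux P) {A : Set Ω} (hA : MeasurableSet A) {t : ℝ}
    (h0 : 0 ≤ t) (h1 : t ≤ P.real A) :
    ∃ B : Set Ω, MeasurableSet B ∧ B ⊆ A ∧ P.real B = t := by
  rcases h0.eq_or_lt with rfl | h0
  · exact ⟨∅, .empty, Set.empty_subset _, by simp⟩
  rcases h1.eq_or_lt with h1 | h1
  · exact ⟨A, hA, subset_rfl, h1.symm⟩
  obtain ⟨B, hB, hBA, h⟩ := hD A hA (ENNReal.ofReal t) (by simpa using h0)
    ((ENNReal.ofReal_lt_iff_lt_toReal h0.le (measure_ne_top _ _)).2 h1)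
  exact ⟨B, hB, hBA, by simp [measureReal_def, h, h0.le]⟩

/-- A maximal family of measurable sets that is totally ordered by inclusion up to null sets. -/
structure IsMaxAEChain (P : Measure Ω) (M : Set (Set Ω)) :
    Prop where
  meas : ∀ A ∈ M, MeasurableSet A
  total : ∀ A ∈ M, ∀ B ∈ M, P (A \ B) = 0 ∨ P (B \ A) = 0
  maximal : ∀ B, MeasurableSet B → (∀ A ∈ M, P (A \ B) = 0 ∨ P (B \ A) = 0) → B ∈ M

namespace IsMaxAEChain

variable {P : Measure Ω} {M : Set (Set Ω)}

lemma exists_isMaxAEChain (P : Measure Ω) : ∃ M : Set (Set Ω), IsMaxAEChain P M := by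
  let r : {A : Set Ω // MeasurableSet A} → {A : Set Ω // MeasurableSet A} → Prop :=
    fun A B => P (A.1 \ B.1) = 0
  obtain ⟨hc, hmax⟩ := maxChain_spec (r := r)
  refine ⟨Subtype.val '' maxChain r, ?_, ?_, ?_⟩
  · rintro _ ⟨A, -, rfl⟩
    exact A.2
  · rintro _ ⟨A, hA, rfl⟩ _ ⟨B, hB, rfl⟩
    by_cases h : A = B
    · left; simp [h]
    · exact hc hA hB h
  · intro B hB h
    have := hmax (hc.insert (a := ⟨B, hB⟩) fun A hA _ => (h A.1 ⟨A, hA, rfl⟩).symm)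
      (Set.subset_insert _ _)
    exact ⟨⟨B, hB⟩, this ▸ Set.mem_insert _ _, rfl⟩

/-- Complementation reverses the order, so it exchanges suprema and infima in a chain. -/
lemma compl (h : IsMaxAEChain P M) : IsMaxAEChain P {A | Aᶜ ∈ M} where
  meas A hA := (h.meas _ hA).of_compl
  total A hA B hB := by
    simpa [sdiff_eq, Set.inter_comm] using h.total _ hB _ hA
  maximal B hB H := h.maximal _ hB.compl fun A hA => by
    simpa [sdiff_eq, Set.inter_comm, or_comm] using H Aᶜ (by simpa using hA)

/-- A maximal chain is closed under arbitrary countable unions, because any measurable set comparable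
with all of its members belongs to it. -/
lemma iUnion_mem (h : IsMaxAEChain P M) {ι : Type*} [Countable ι] {A : ι → Set Ω}
    (hA : ∀ i, A i ∈ M) : (⋃ i, A i) ∈ M := by
  refine h.maximal _ (.iUnion fun i => h.meas _ (hA i)) fun C hC => ?_
  by_cases H : ∀ i, P (A i \ C) = 0
  · right
    rw [Set.iUnion_sdiff]
    exact measure_iUnion_null H
  · left
    push Not at H
    obtain ⟨i, hi⟩ := H
    exact measure_mono_null (Set.sdiff_subset_sdiff_right (Set.subset_iUnion A i))
      ((h.total _ (hA i) _ hC).resolve_left hi)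

lemma union_mem (h : IsMaxAEChain P M) {A B : Set Ω} (hA : A ∈ M) (hB : B ∈ M) : A ∪ B ∈ M := by
  rw [Set.union_eq_iUnion]
  exact h.iUnion_mem (by rintro (_ | _) <;> assumption)

lemma real_le_of_ae [IsFiniteMeasure P] {A B : Set Ω} (h : P (A \ B) = 0) :
    P.real A ≤ P.real B := by
  exact ENNReal.toReal_mono (measure_ne_top _ _) (measure_mono_ae (ae_le_set.2 h))

lemma ae_of_real_le [IsFiniteMeasure P] {A B : Set Ω} (hA : MeasurableSet A)
    (hB : MeasurableSet B) (h : P (A \ B) = 0) (hr : P.real B ≤ P.real A) : P (B \ A) = 0 := by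
  have h1 := measureReal_sdiff_add_inter (μ := P) (s := A) hB
  have h2 := measureReal_sdiff_add_inter (μ := P) (s := B) hA
  have h3 : P.real (A \ B) = 0 := by simp [measureReal_def, h]
  rw [Set.inter_comm] at h2
  have h4 : P.real (B \ A) = 0 := le_antisymm (by linarith) measureReal_nonneg
  simpa [measureReal_eq_zero_iff] using h4

/-- The supremum of the measures at most `t` occurring in the chain is attained. -/
lemma exists_greatest [IsProbabilityMeasure P] (h : IsMaxAEChain P M) {t : ℝ} (h0 : 0 ≤ t) :
    ∃ L ∈ M, P.real L ≤ t ∧ ∀ A ∈ M, P.real A ≤ t → P.real A ≤ P.real L := by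
  let V : Set ℝ := P.real '' {A | A ∈ M ∧ P.real A ≤ t}
  have hne : V.Nonempty := ⟨_, ∅, ⟨h.maximal _ .empty (by simp), by simpa⟩, rfl⟩
  have hbd : BddAbove V := ⟨t, by rintro _ ⟨A, hA, rfl⟩; exact hA.2⟩
  obtain ⟨u, -, hu, huV⟩ := exists_seq_tendsto_sSup hne hbd
  choose A hA hAu using huV
  have key : ∀ n, Set.accumulate A n ∈ M ∧ P.real (Set.accumulate A n) ≤ t := by
    intro n
    induction n with
    | zero => simpa using hA 0
    | succ n ih =>
      rw [Set.accumulate_succ]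
      refine ⟨h.union_mem ih.1 (hA _).1, ?_⟩
      rcases h.total _ ih.1 _ (hA (n + 1)).1 with H | H
      · refine (real_le_of_ae ?_).trans (hA (n + 1)).2
        rwa [Set.union_sdiff_right]
      · refine (real_le_of_ae ?_).trans ih.2
        rwa [Set.union_sdiff_left]
  have hlim : Tendsto (fun n => P.real (Set.accumulate A n)) atTop (𝓝 (P.real (⋃ n, A n))) :=
    (ENNReal.tendsto_toReal (measure_ne_top _ _)).comp tendsto_measure_iUnion_accumulate
  -- A countable union of members with measures tending to the supremum attains it; passing to
  -- the finite unions shows that its measure does not exceed `t`.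
  refine ⟨⋃ n, A n, h.iUnion_mem fun n => (hA n).1, le_of_tendsto' hlim fun n => (key n).2, ?_⟩
  intro C hC hCt
  refine (le_csSup hbd ⟨C, ⟨hC, hCt⟩, rfl⟩).trans (le_of_tendsto' hu fun n => ?_)
  rw [← hAu]
  exact measureReal_mono (Set.subset_iUnion A n)

/-- Under the Darboux property a maximal chain has no gaps: otherwise a set of intermediate
measure could be inserted between the largest member below the gap and the smallest above it. -/
lemma exists_measureReal_eq [IsProbabilityMeasure P] (hD : Darboux P) (h : IsMaxAEChain P M)
    {t : ℝ} (h0 : 0 ≤ t) (h1 : t ≤ 1) : ∃ A ∈ M, P.real A = t := by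
  obtain ⟨L, hL, hLt, hLmax⟩ := h.exists_greatest h0
  obtain ⟨R', hR', hRt', hRmax'⟩ := h.compl.exists_greatest (t := 1 - t) (by linarith)
  obtain ⟨R, rfl⟩ : ∃ R, R' = Rᶜ := ⟨R'ᶜ, by simp⟩
  have hR : R ∈ M := by simpa using hR'
  have hRm := h.meas _ hR
  have hLm := h.meas _ hL
  rw [probReal_compl_eq_one_sub hRm] at hRt'
  have hRmin : ∀ A ∈ M, t ≤ P.real A → P.real R ≤ P.real A := by
    intro A hA hAt
    have := hRmax' Aᶜ (by simpa using hA)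
    rw [probReal_compl_eq_one_sub hRm, probReal_compl_eq_one_sub (h.meas _ hA)] at this
    linarith [this (by linarith)]
  by_cases hLR : P (L \ R) = 0
  swap
  · have := real_le_of_ae ((h.total _ hL _ hR).resolve_left hLR)
    exact ⟨L, hL, by linarith⟩
  have hd : P.real R ≤ P.real (R \ L) + P.real L := by
    have h2 := measureReal_sdiff_add_inter (μ := P) (s := R) hLm
    have h3 := measureReal_mono (μ := P) (Set.inter_subset_right (s := R) (t := L))
    linarith
  obtain ⟨B, hB, hBs, hBt⟩ := hD.exists_measureReal_eq (hRm.diff hLm) (t := t - P.real L)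
    (by linarith) (by linarith)
  refine ⟨L ∪ B, h.maximal _ (hLm.union hB) fun C hC => ?_, ?_⟩
  · have hCm := h.meas _ hC
    rcases le_total (P.real C) t with hCt | hCt
    · left
      refine measure_mono_null (t := C \ L) (Set.sdiff_subset_sdiff_right Set.subset_union_left) ?_
      rcases h.total _ hC _ hL with H | H
      · exact H
      · exact ae_of_real_le hLm hCm H (hLmax C hC hCt)
    · right
      have hRC : P (R \ C) = 0 := by
        rcases h.total _ hR _ hC with H | H
        · exact H
        · exact ae_of_real_le hCm hRm H (hRmin C hC hCt)
      refine measure_mono_null (t := (L \ R) ∪ (R \ C)) ?_ (measure_union_null hLR hRC)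
      rintro x ⟨hx | hx, hxC⟩
      · by_cases hxR : x ∈ R
        · exact .inr ⟨hxR, hxC⟩
        · exact .inl ⟨hx, hxR⟩
      · exact .inr ⟨(hBs hx).1, hxC⟩
  · rw [measureReal_union (Set.disjoint_left.2 fun x hx hxB => (hBs hxB).2 hx) hB, hBt]
    ring

end IsMaxAEChain

/-! ### A uniformly distributed coordinate on the circle -/

/-- A Darboux probability space carries a uniformly distributed variable with values in the
circle: the first time at which a point enters the sets of a chain indexed by measure. Only
rational times enter the definition, so that everything stays measurable and the null-set
ambiguity of the chain is harmless. -/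
lemma Darboux.exists_measurePreserving {P : Measure Ω} [IsProbabilityMeasure P] (hD : Darboux P) :
    ∃ θ : Ω → UnitAddCircle, MeasurePreserving θ P volume := by
  obtain ⟨M, hM⟩ := IsMaxAEChain.exists_isMaxAEChain P
  have hS : ∀ t : ℝ, ∃ A ∈ M, 0 ≤ t → t ≤ 1 → P.real A = t := by
    intro t
    by_cases ht : 0 ≤ t ∧ t ≤ 1
    · obtain ⟨A, hA, h⟩ := hM.exists_measureReal_eq hD ht.1 ht.2
      exact ⟨A, hA, fun _ _ => h⟩
    · exact ⟨∅, hM.maximal _ .empty (by simp), fun h h' => absurd ⟨h, h'⟩ ht⟩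
  choose S hSM hSt using hS
  have hSm : ∀ t, MeasurableSet (S t) := fun t => hM.meas _ (hSM t)
  have hmono : ∀ s t : ℝ, 0 ≤ s → s < t → t ≤ 1 → P (S s \ S t) = 0 := by
    intro s t hs hst ht
    refine (hM.total _ (hSM s) _ (hSM t)).resolve_right fun H => ?_
    have := IsMaxAEChain.real_le_of_ae H
    rw [hSt t (by linarith) ht, hSt s hs (by linarith)] at this
    linarith
  let V : Ω → Set ℝ := fun ω => {t | t = 1 ∨ ∃ q : ℚ, (q : ℝ) = t ∧ 0 ≤ t ∧ t ≤ 1 ∧ ω ∈ S t}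
  have hbd : ∀ ω, BddBelow (V ω) := by
    refine fun ω => ⟨0, ?_⟩
    rintro t (rfl | ⟨q, -, h, -⟩)
    · norm_num
    · exact h
  have hne : ∀ ω, (V ω).Nonempty := fun ω => ⟨1, .inl rfl⟩
  let τ : Ω → ℝ := fun ω => sInf (V ω)
  have hτ : ∀ t ω, τ ω < t ↔
      1 < t ∨ ∃ q : ℚ, ((q : ℝ) < t ∧ 0 ≤ (q : ℝ) ∧ (q : ℝ) ≤ 1) ∧ ω ∈ S q := by
    intro t ω
    rw [csInf_lt_iff (hbd ω) (hne ω)]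
    constructor
    · rintro ⟨_, rfl | ⟨q, rfl, h1, h2, h3⟩, h⟩
      · exact .inl h
      · exact .inr ⟨q, ⟨h, h1, h2⟩, h3⟩
    · rintro (h | ⟨q, ⟨h, h1, h2⟩, h3⟩)
      · exact ⟨1, .inl rfl, h⟩
      · exact ⟨q, .inr ⟨q, rfl, h1, h2, h3⟩, h⟩
  have hset : ∀ t ≤ 1, {ω | τ ω < t} =
      ⋃ q : {q : ℚ // (q : ℝ) < t ∧ 0 ≤ (q : ℝ) ∧ (q : ℝ) ≤ 1}, S (q.1 : ℝ) := by
    intro t ht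
    ext ω
    simp only [Set.mem_ofPred_eq, hτ, Set.mem_iUnion, Subtype.exists, exists_prop, not_lt.2 ht,
      false_or]
  have hτm : Measurable τ := by
    refine measurable_of_Iio fun t => ?_
    rcases le_or_gt t 1 with ht | ht
    · change MeasurableSet {ω | τ ω < t}
      rw [hset t ht]
      exact .iUnion fun q => hSm _
    · convert MeasurableSet.univ
      ext ω
      simp [hτ, ht]
  have hval : ∀ t, 0 ≤ t → t ≤ 1 → P.real {ω | τ ω < t} = t := by
    intro t h0 h1
    apply le_antisymm
    · conv_rhs => rw [← hSt t h0 h1]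
      apply IsMaxAEChain.real_le_of_ae
      rw [hset t h1, Set.iUnion_sdiff]
      exact measure_iUnion_null fun q => hmono _ _ q.2.2.1 q.2.1 h1
    · rcases h0.eq_or_lt with rfl | h0
      · exact measureReal_nonneg
      refine le_of_forall_lt fun s hs => ?_
      obtain ⟨q, hq1, hq2⟩ := exists_rat_btwn (max_lt hs h0)
      have hq0 : 0 ≤ (q : ℝ) := (le_max_right _ _).trans hq1.le
      refine (le_max_left _ _).trans_lt (hq1.trans_le ?_)
      rw [← hSt q hq0 (by linarith), hset t h1]
      exact measureReal_mono (Set.subset_iUnion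
        (fun q : {q : ℚ // (q : ℝ) < t ∧ 0 ≤ (q : ℝ) ∧ (q : ℝ) ≤ 1} => S (q.1 : ℝ))
        ⟨q, hq2, hq0, by linarith⟩)
  have hmap : MeasurePreserving τ P (volume.restrict (Set.Ioc (0 : ℝ) (0 + 1))) := by
    refine ⟨hτm, ?_⟩
    have := Measure.isFiniteMeasure_map P τ
    refine Measure.ext_of_Ici _ _ fun t => ?_
    rw [Measure.map_apply hτm measurableSet_Ici, Measure.restrict_congr_set Ico_ae_eq_Ioc.symm,
      Measure.restrict_apply measurableSet_Ici]
    have e : τ ⁻¹' Set.Ici t = {ω | τ ω < t}ᶜ := by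
      ext; simp
    have e2 : Set.Ici t ∩ Set.Ico 0 (0 + 1) = Set.Ico (max t 0) 1 := by
      ext; simp [and_assoc]
    have hlt : MeasurableSet {ω | τ ω < t} := hτm measurableSet_Iio
    rw [e, e2, Real.volume_Ico, ← ofReal_measureReal, probReal_compl_eq_one_sub hlt]
    rcases le_or_gt t 0 with h | h
    · rw [max_eq_right h]
      have := hval 0 le_rfl zero_le_one
      have h' : P.real {ω | τ ω < t} ≤ P.real {ω | τ ω < 0} :=
        measureReal_mono fun ω (hω : τ ω < t) => lt_of_lt_of_le hω h
      rw [le_antisymm (h'.trans this.le) measureReal_nonneg]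
    · rw [max_eq_left h.le]
      rcases le_or_gt t 1 with h' | h'
      · rw [hval t h.le h']
      · have : {ω | τ ω < t} = Set.univ := by
          ext ω; simp [hτ, h']
        rw [this, ENNReal.ofReal_of_nonpos (by simp), ENNReal.ofReal_of_nonpos (by linarith)]
  exact ⟨_, (UnitAddCircle.measurePreserving_mk 0).comp hmap⟩

/-! ### Arcs -/

/-- The set of those points whose circular coordinate `θ` lies in the half-open arc of length `a`
starting at `x`. For `y` in the circle, `AddCircle.equivIco 1 0 y` is its representative in
`[0, 1)`. -/
def arc {Ω : Type*} (θ : Ω → UnitAddCircle) (x : UnitAddCircle) (a : ℝ) : Set Ω :=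
  {ω | (AddCircle.equivIco 1 0 (θ ω - x) : ℝ) < a}

section arc

variable {θ : Ω → UnitAddCircle} {P : Measure Ω}

lemma measurableSet_circle_arc (a : ℝ) :
    MeasurableSet {y : UnitAddCircle | (AddCircle.equivIco 1 0 y : ℝ) < a} :=
  measurableSet_lt (measurable_subtype_coe.comp
    (AddCircle.measurableEquivIco 1 0).measurable) measurable_const

lemma measurableSet_arc (hθ : Measurable θ) (x : UnitAddCircle) (a : ℝ) :
    MeasurableSet (arc θ x a) :=
  (hθ.sub_const x) (measurableSet_circle_arc a)

lemma measure_arc (hθ : MeasurePreserving θ P volume) (x : UnitAddCircle) {a : ℝ}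
    (h1 : a ≤ 1) : P (arc θ x a) = ENNReal.ofReal a := by
  have h := ((measurePreserving_sub_right volume x).comp hθ).measure_preimage
    (measurableSet_circle_arc a).nullMeasurableSet
  refine h.trans ?_
  rw [← (UnitAddCircle.measurePreserving_mk 0).measure_preimage
    (measurableSet_circle_arc a).nullMeasurableSet, Measure.restrict_congr_set Ico_ae_eq_Ioc.symm,
    Measure.restrict_apply ((UnitAddCircle.measurePreserving_mk 0).measurable
      (measurableSet_circle_arc a))]
  have : ((↑) : ℝ → UnitAddCircle) ⁻¹' {y | (AddCircle.equivIco 1 0 y : ℝ) < a} ∩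
      Set.Ico 0 (0 + 1) = Set.Ico 0 a := by
    ext r
    simp only [Set.mem_inter_iff, Set.mem_preimage, Set.mem_ofPred_eq, Set.mem_Ico, zero_add]
    rw [AddCircle.coe_equivIco_mk_apply]
    constructor
    · rintro ⟨h2, h3, h4⟩
      rw [div_one, mul_one, Int.fract_eq_self.2 ⟨h3, h4⟩] at h2
      exact ⟨h3, h2⟩
    · rintro ⟨h3, h2⟩
      rw [div_one, mul_one, Int.fract_eq_self.2 ⟨h3, by linarith⟩]
      exact ⟨h2, h3, by linarith⟩
  rw [this, Real.volume_Ico, sub_zero]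

lemma arc_one {Ω : Type*} {θ : Ω → UnitAddCircle} (x : UnitAddCircle) : arc θ x 1 = Set.univ := by
  ext ω
  have := (AddCircle.equivIco 1 0 (θ ω - x)).2.2
  simpa [arc] using this

/-- Shifting the starting point by `a` shifts the coordinate by `-a`, up to one full turn. -/
lemma arc_shift_coord (y : UnitAddCircle) {a : ℝ} (h0 : 0 ≤ a) (h1 : a ≤ 1) :
    (AddCircle.equivIco 1 0 (y - (a : UnitAddCircle)) : ℝ) =
      if (AddCircle.equivIco 1 0 y : ℝ) < a then (AddCircle.equivIco 1 0 y : ℝ) - a + 1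
      else (AddCircle.equivIco 1 0 y : ℝ) - a := by
  obtain ⟨r, ⟨hr0, hr1⟩, rfl⟩ : ∃ r : ℝ, r ∈ Set.Ico (0 : ℝ) 1 ∧ (r : UnitAddCircle) = y :=
    ⟨_, by simpa using (AddCircle.equivIco 1 0 y).2, AddCircle.coe_equivIco⟩
  rw [← AddCircle.coe_sub, AddCircle.coe_equivIco_mk_apply, AddCircle.coe_equivIco_mk_apply]
  simp only [div_one, mul_one, Int.fract_eq_self.2 ⟨hr0, hr1⟩]
  split_ifs with h
  · rw [← Int.fract_add_one, Int.fract_eq_self]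
    constructor <;> linarith
  · rw [Int.fract_eq_self]
    constructor <;> linarith

lemma arc_add {Ω : Type*} {θ : Ω → UnitAddCircle} (x : UnitAddCircle) {a b : ℝ} (ha : 0 ≤ a)
    (hb : 0 ≤ b) (hab : a + b ≤ 1) :
    arc θ x (a + b) = arc θ x a ∪ arc θ (x + a) b := by
  ext ω
  simp only [arc, Set.mem_union, Set.mem_ofPred_eq, ← sub_sub]
  rw [arc_shift_coord _ ha (by linarith)]
  split_ifs with h
  · simp only [h, true_or, iff_true]
    linarith
  · simp only [h, false_or]
    constructor <;> intro <;> linarith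

lemma disjoint_arc {Ω : Type*} {θ : Ω → UnitAddCircle} (x : UnitAddCircle) {a b : ℝ} (ha : 0 ≤ a)
    (hb : 0 ≤ b) (hab : a + b ≤ 1) :
    Disjoint (arc θ x a) (arc θ (x + a) b) := by
  refine Set.disjoint_left.2 fun ω h h' => ?_
  simp only [arc, Set.mem_ofPred_eq, ← sub_sub] at h h'
  rw [arc_shift_coord _ ha (by linarith), if_pos h] at h'
  have := (AddCircle.equivIco 1 0 (θ ω - x)).2.1
  linarith

lemma tendsto_arc (hθ : MeasurePreserving θ P volume) (x : UnitAddCircle) (a : ℝ) :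
    Tendsto (fun y => (P (symmDiff (arc θ x a) (arc θ y a))).toReal) (𝓝 x) (𝓝 0) := by
  let F : C(UnitAddCircle × UnitAddCircle, UnitAddCircle) := ⟨fun p => p.2 - p.1, by fun_prop⟩
  have h := tendsto_measure_symmDiff_preimage_nhds_zero (μ := volume) (ν := volume)
    (F.curry.continuous.tendsto x)
    (.of_forall fun y => measurePreserving_sub_right volume y)
    (measurePreserving_sub_right volume x) (measurableSet_circle_arc a).nullMeasurableSet
    (measure_ne_top _ _)
  have h' := (ENNReal.tendsto_toReal ENNReal.zero_ne_top).comp h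
  refine h'.congr fun y => ?_
  have hm : ∀ z : UnitAddCircle, MeasurableSet
      (F.curry z ⁻¹' {y : UnitAddCircle | (AddCircle.equivIco 1 0 y : ℝ) < a}) := fun z =>
    (F.curry z).continuous.measurable (measurableSet_circle_arc a)
  rw [symmDiff_comm (arc θ x a)]
  exact congrArg ENNReal.toReal
    (hθ.measure_preimage ((hm y).symmDiff (hm x)).nullMeasurableSet).symm

end arc

/-! ### Uniqueness -/

/-- Induction on the number of pieces of measure at most `δ / 2`, where `δ` is a modulus of absolute
continuity for `ε = 1`, into which the set can be cut by the Darboux property. -/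
lemma AbsCont.bounded {P : Measure Ω} [IsProbabilityMeasure P] (hD : Darboux P) {d : Set Ω → ℝ}
    (hadd : FinAdd d) (hac : AbsCont P d) :
    ∃ K : ℝ, ∀ A, MeasurableSet A → |d A| ≤ K := by
  obtain ⟨δ, hδ, h⟩ := hac 1 one_pos
  have key : ∀ n : ℕ, ∀ A, MeasurableSet A → P.real A ≤ n * (δ / 2) → |d A| ≤ n + 1 := by
    intro n
    induction n with
    | zero =>
      intro A hA hP
      have := h A hA (lt_of_le_of_lt hP (by simpa using hδ))
      simpa using this.le
    | succ n ih =>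
      intro A hA hP
      push_cast at hP ⊢
      rcases le_total (P.real A) (δ / 2) with hs | hs
      · have := h A hA (lt_of_le_of_lt hs (by linarith))
        have hn : (0 : ℝ) ≤ n := n.cast_nonneg
        linarith
      · obtain ⟨B, hB, hBA, hBP⟩ := hD.exists_measureReal_eq hA (by linarith) hs
        have h1 := h B hB (lt_of_eq_of_lt hBP (by linarith))
        have h2 := ih (A \ B) (hA.diff hB) (by
          rw [measureReal_sdiff hBA hB, hBP]; linarith)
        have h3 := hadd B (A \ B) hB (hA.diff hB) Set.disjoint_sdiff_right
        rw [Set.union_sdiff_cancel hBA] at h3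
        rw [h3]
        have := abs_add_le (d B) (d (A \ B))
        linarith
  obtain ⟨n, hn⟩ := exists_nat_ge (1 / (δ / 2))
  refine ⟨n + 1, fun A hA => key n A hA (measureReal_le_one.trans ?_)⟩
  rwa [div_le_iff₀ (by linarith)] at hn

/-- Replacing `A` by its complement if necessary, one may double it inside `Ω`; so an additive
function of the measure alone could be doubled indefinitely if it were nonzero somewhere. -/
lemma eq_zero_of_depends_on_measure {P : Measure Ω} [IsProbabilityMeasure P] (hD : Darboux P)
    {d : Set Ω → ℝ} (hadd : FinAdd d) (hac : AbsCont P d) (huniv : d Set.univ = 0)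
    (heq : ∀ A B, MeasurableSet A → MeasurableSet B → P A = P B → d A = d B)
    {A : Set Ω} (hA : MeasurableSet A) : d A = 0 := by
  have hcompl : ∀ A, MeasurableSet A → d Aᶜ = -d A := by
    intro A hA
    have := hadd A Aᶜ hA hA.compl disjoint_compl_right
    rw [Set.union_compl_self, huniv] at this
    linarith
  have hhalf : ∀ A, MeasurableSet A → P.real A ≤ 1 / 2 →
      ∃ B, MeasurableSet B ∧ d B = 2 * d A := by
    intro A hA hP
    obtain ⟨B, hB, hBA, hBP⟩ := hD.exists_measureReal_eq hA.compl (t := P.real A)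
      measureReal_nonneg (by rw [probReal_compl_eq_one_sub hA]; linarith)
    refine ⟨A ∪ B, hA.union hB, ?_⟩
    rw [hadd A B hA hB (Set.disjoint_left.2 fun x hx hxB => hBA hxB hx),
      heq B A hB hA ((measureReal_eq_measureReal_iff).1 hBP)]
    ring
  have hdouble : ∀ A, MeasurableSet A → ∃ B, MeasurableSet B ∧ |d B| = 2 * |d A| := by
    intro A hA
    rcases le_total (P.real A) (1 / 2) with h | h
    · obtain ⟨B, hB, h⟩ := hhalf A hA h
      exact ⟨B, hB, by rw [h, abs_mul, abs_two]⟩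
    · obtain ⟨B, hB, h⟩ := hhalf Aᶜ hA.compl (by rw [probReal_compl_eq_one_sub hA]; linarith)
      exact ⟨B, hB, by rw [h, abs_mul, abs_two, hcompl A hA, abs_neg]⟩
  obtain ⟨K, hK⟩ := AbsCont.bounded hD hadd hac
  have hpow : ∀ n : ℕ, ∃ B, MeasurableSet B ∧ |d B| = 2 ^ n * |d A| := by
    intro n
    induction n with
    | zero => exact ⟨A, hA, by simp⟩
    | succ n ih =>
      obtain ⟨B, hB, h⟩ := ih
      obtain ⟨C, hC, h'⟩ := hdouble B hB
      exact ⟨C, hC, by rw [h', h, pow_succ]; ring⟩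
  by_contra hne
  have hpos : 0 < |d A| := abs_pos.2 hne
  obtain ⟨n, hn⟩ := pow_unbounded_of_one_lt (K / |d A|) one_lt_two
  obtain ⟨B, hB, h⟩ := hpow n
  rw [div_lt_iff₀ hpos, ← h] at hn
  exact absurd (hK B hB) (not_le.2 hn)

/-! ### The averaged measure -/

/-- A uniformly continuous cocycle `Δ` is of the form
`Δ(V,W) = m(W) − m(V)` for a unique finitely-additive `m ≪ P` with `m(Ω)=0`. -/
theorem exists_unique_measure_of_uniformly_continuous_cocycle
    {Ω : Type*} [MeasurableSpace Ω] (P : Measure Ω) [IsProbabilityMeasure P]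
    (hD : Darboux P) (Δ : Set Ω → Set Ω → ℝ)
    (h1 : ∀ U V W : Set Ω, MeasurableSet U → MeasurableSet V → MeasurableSet W →
      P U = P V → P V = P W → Δ U W = Δ U V + Δ V W)
    (h2 : ∀ V₁ V₂ W₁ W₂ : Set Ω, MeasurableSet V₁ → MeasurableSet V₂ →
      MeasurableSet W₁ → MeasurableSet W₂ → Disjoint V₁ V₂ → Disjoint W₁ W₂ →
      P V₁ = P W₁ → P V₂ = P W₂ →
      Δ (V₁ ∪ V₂) (W₁ ∪ W₂) = Δ V₁ W₁ + Δ V₂ W₂)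
    (h3 : ∀ ε : ℝ, 0 < ε → ∃ δ : ℝ, 0 < δ ∧
      ∀ V W V' W' : Set Ω, MeasurableSet V → MeasurableSet W →
        MeasurableSet V' → MeasurableSet W' → P V = P W → P V' = P W' →
        (P (symmDiff V V')).toReal + (P (symmDiff W W')).toReal < δ →
        |Δ V' W' - Δ V W| < ε) :
    ∃ m : Set Ω → ℝ, MesSpec P Δ m ∧
      (∀ m' : Set Ω → ℝ, MesSpec P Δ m' →
        ∀ A : Set Ω, MeasurableSet A → m' A = m A) ∧
      ∀ A : Set Ω, MeasurableSet A → ∀ C : ℝ,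
        (∀ B : Set Ω, MeasurableSet B → P B = P A → |Δ B A| ≤ C) → |m A| ≤ C := by

  obtain ⟨θ, hθ⟩ := hD.exists_measurePreserving
  have hvol : (volume : Measure UnitAddCircle).real Set.univ = 1 := by
    simp [measureReal_def]
  have hm := measurableSet_arc hθ.measurable
  have hP : ∀ x A, P (arc θ x (P.real A)) = P A := fun x A => by
    rw [measure_arc hθ x measureReal_le_one, ofReal_measureReal]
  have hself : ∀ A, MeasurableSet A → Δ A A = 0 := fun A hA => by
    have := h1 A A A hA hA hA rfl rfl
    linarith
  have hint : ∀ A, MeasurableSet A →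
      Integrable (fun x : UnitAddCircle => Δ (arc θ x (P.real A)) A) := by
    intro A hA
    apply Continuous.integrable_of_hasCompactSupport _ (HasCompactSupport.of_compactSpace _)
    refine continuous_iff_continuousAt.2 fun x => Metric.tendsto_nhds.2 fun ε hε => ?_
    obtain ⟨δ, hδ, h⟩ := h3 ε hε
    filter_upwards [(tendsto_arc hθ x (P.real A)).eventually (gt_mem_nhds hδ)] with y hy
    exact h _ _ _ _ (hm x _) hA (hm y _) hA (hP x A) (hP y A) (by simpa using hy)
  let m : Set Ω → ℝ := fun A => ∫ x : UnitAddCircle, Δ (arc θ x (P.real A)) A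
  have hbound : ∀ A, ∀ C : ℝ, (∀ x, |Δ (arc θ x (P.real A)) A| ≤ C) → |m A| ≤ C := by
    intro A C hC
    have := norm_integral_le_of_norm_le_const (μ := (volume : Measure UnitAddCircle))
      (f := fun x => Δ (arc θ x (P.real A)) A) (.of_forall hC)
    simpa [hvol] using this
  have hmadd : FinAdd m := by
    intro A B hA hB hAB
    have hr : P.real (A ∪ B) = P.real A + P.real B := measureReal_union hAB hB
    have hle : P.real A + P.real B ≤ 1 := hr ▸ measureReal_le_one
    have hpt : ∀ x : UnitAddCircle, Δ (arc θ x (P.real (A ∪ B))) (A ∪ B) =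
        Δ (arc θ x (P.real A)) A +
          Δ (arc θ (x + (P.real A : UnitAddCircle)) (P.real B)) B := fun x => by
      rw [hr, arc_add x measureReal_nonneg measureReal_nonneg hle]
      exact h2 _ _ _ _ (hm _ _) (hm _ _) hA hB
        (disjoint_arc x measureReal_nonneg measureReal_nonneg hle) hAB (hP _ _) (hP _ _)
    -- The second arc starts at `x + P(A)`; invariance of the Haar measure absorbs the shift.
    change ∫ x, _ = (∫ x, _) + ∫ x, _
    simp_rw [hpt]
    rw [integral_add (hint A hA) ((hint B hB).comp_add_right _)]
    congr 1
    exact integral_add_right_eq_self (fun x => Δ (arc θ x (P.real B)) B) _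
  have hmac : AbsCont P m := by
    intro ε hε
    obtain ⟨δ, hδ, h⟩ := h3 (ε / 2) (half_pos hε)
    refine ⟨δ / 2, half_pos hδ, fun A hA hPA => ?_⟩
    refine (hbound A (ε / 2) fun x => ?_).trans_lt (half_lt_self hε)
    have := h ∅ ∅ (arc θ x (P.real A)) A .empty .empty (hm _ _) hA rfl (hP x A) (by
      rw [← Set.bot_eq_empty, bot_symmDiff, bot_symmDiff, hP x A]
      linarith)
    rw [hself ∅ .empty, sub_zero] at this
    exact this.le
  have hmuniv : m Set.univ = 0 := by
    simp [m, arc_one, hself]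
  have hmΔ : ∀ V W : Set Ω, MeasurableSet V → MeasurableSet W → P V = P W →
      Δ V W = m W - m V := by
    intro V W hV hW hVW
    have hr : P.real W = P.real V := by simp [measureReal_def, hVW]
    have hpt : ∀ x : UnitAddCircle, Δ (arc θ x (P.real W)) W =
        Δ (arc θ x (P.real V)) V + Δ V W := fun x => by
      rw [hr]
      exact h1 _ _ _ (hm _ _) hV hW (hP _ _) hVW
    have : m W = m V + Δ V W := by
      change ∫ x, _ = (∫ x, _) + _
      simp_rw [hpt]
      rw [integral_add (hint V hV) (integrable_const _)]
      simp [hvol]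
    linarith
  refine ⟨m, ⟨hmadd, hmac, hmuniv, hmΔ⟩, ?_, ?_⟩
  · rintro m' ⟨hadd', hac', huniv', hΔ'⟩ A hA
    rw [← sub_eq_zero]
    refine eq_zero_of_depends_on_measure hD (d := fun A => m' A - m A) ?_ ?_ ?_ ?_ hA
    · intro A B hA hB hAB
      simp only [hadd' A B hA hB hAB, hmadd A B hA hB hAB]
      ring
    · intro ε hε
      obtain ⟨δ₁, hδ₁, H₁⟩ := hac' (ε / 2) (half_pos hε)
      obtain ⟨δ₂, hδ₂, H₂⟩ := hmac (ε / 2) (half_pos hε)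
      refine ⟨min δ₁ δ₂, lt_min hδ₁ hδ₂, fun A hA hPA => ?_⟩
      have := H₁ A hA (hPA.trans_le (min_le_left _ _))
      have := H₂ A hA (hPA.trans_le (min_le_right _ _))
      have := abs_sub (m' A) (m A)
      linarith
    · simp [huniv', hmuniv]
    · intro A B hA hB hAB
      have e1 := hΔ' A B hA hB hAB
      have e2 := hmΔ A B hA hB hAB
      change m' A - m A = m' B - m B
      linarith
  · intro A hA C hC
    exact hbound A C fun x => hC _ (hm x _) (hP x A)

end APE
end
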